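/- The Riemann hypothesis holds if and only if for every positive integer n one has (∑_{k ≤ δ(n)} 1/k − n²/2)² < 36·n³. -/

import Mathlib

open scoped Real

/-- The Riemann hypothesis: every nontrivial zero of ζ (a zero with real part strictly
between 0 and 1) has real part 1/2. -/
def RH : Prop := ∀ s : ℂ, riemannZeta s = 0 → 0 < s.re → s.re < 1 → s.re = 1 / 2

/-- η(j) = p if j = p^k is a power of a prime p (k ≥ 1), and η(j) = 1 otherwise. -/
noncomputable def eta (j : ℕ) : ℕ := if IsPrimePow j then j.minFac else 1

/-- δ(n) = ∏_{m < n} ∏_{j ≤ m} η(j). -/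
noncomputable def delta (n : ℕ) : ℕ :=
  ∏ m ∈ Finset.range n, ∏ j ∈ Finset.Icc 1 m, eta j

namespace HB

open Filter Topology MeasureTheory Set
open ArithmeticFunction (vonMangoldt)

/-- `∑ Λ(k) (x-k)_+`. -/
noncomputable def psi1 (x : ℝ) : ℝ := ∑' k : ℕ, vonMangoldt k * max (x - k) 0

lemma psi1_eq {x : ℝ} {N : ℕ} (h : x ≤ N) :
    psi1 x = ∑ k ∈ Finset.range N, vonMangoldt k * max (x - k) 0 := by
  unfold psi1
  apply tsum_eq_sum
  intro k hk
  have : (N : ℝ) ≤ k := by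
    simp only [Finset.mem_range, not_lt] at hk
    exact_mod_cast hk
  rw [max_eq_right (by linarith)]; simp

lemma eta_pos (j : ℕ) : 0 < eta j := by
  unfold eta; split_ifs
  · exact Nat.minFac_pos j
  · exact one_pos

lemma log_eta (j : ℕ) : Real.log (eta j) = vonMangoldt j := by
  unfold eta
  rw [ArithmeticFunction.vonMangoldt_apply]
  split_ifs <;> simp

lemma delta_pos (n : ℕ) : 0 < delta n :=
  Finset.prod_pos fun _ _ => Finset.prod_pos fun _ _ => eta_pos _

lemma log_delta (n : ℕ) : Real.log (delta n) = psi1 n := by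
  rw [psi1_eq (le_refl (n:ℝ))]
  have h1 : Real.log (delta n) =
      ∑ m ∈ Finset.range n, ∑ j ∈ Finset.Icc 1 m, vonMangoldt j := by
    unfold delta
    push_cast
    rw [Real.log_prod]
    · refine Finset.sum_congr rfl fun m _ => ?_
      rw [Real.log_prod]
      · exact Finset.sum_congr rfl fun j _ => log_eta j
      · intro j _; exact_mod_cast (eta_pos j).ne'
    · intro m _
      exact_mod_cast (Finset.prod_pos fun j _ => eta_pos j).ne'
  rw [h1]
  clear h1
  induction n with
  | zero => simp
  | succ n ih =>
    rw [Finset.sum_range_succ, ih]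
    have h2 : ∀ k ∈ Finset.range (n+1), vonMangoldt k * max (((n+1:ℕ):ℝ) - k) 0
        = vonMangoldt k * max ((n:ℝ) - k) 0 + vonMangoldt k := by
      intro k hk
      have : (k:ℝ) ≤ n := by
        rw [Finset.mem_range] at hk; exact_mod_cast Nat.lt_succ_iff.mp hk
      rw [max_eq_left (by push_cast; linarith), max_eq_left (by linarith)]
      push_cast; ring
    rw [Finset.sum_congr rfl h2, Finset.sum_add_distrib, Finset.sum_range_succ]
    have h3 : ∑ j ∈ Finset.Icc 1 n, vonMangoldt j = ∑ j ∈ Finset.range (n+1), vonMangoldt j := by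
      rw [Finset.range_eq_Ico, Finset.sum_eq_sum_Ico_succ_bot (by omega)]
      simp
      rfl
    rw [h3]; simp

lemma psi1_nonneg (x : ℝ) : 0 ≤ psi1 x :=
  tsum_nonneg fun _ => mul_nonneg ArithmeticFunction.vonMangoldt_nonneg (le_max_right _ _)

lemma psi1_mono : Monotone psi1 := by
  intro x y hxy
  obtain ⟨N, hN⟩ := exists_nat_ge y
  rw [psi1_eq hN, psi1_eq (hxy.trans hN)]
  gcongr

lemma psi1_continuous : Continuous psi1 := by
  rw [continuous_iff_continuousAt]
  intro x
  obtain ⟨N, hN⟩ := exists_nat_gt x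
  have : psi1 =ᶠ[𝓝 x] fun x => ∑ k ∈ Finset.range N, vonMangoldt k * max (x - k) 0 := by
    filter_upwards [Iio_mem_nhds hN] with y hy
    exact psi1_eq (le_of_lt hy)
  refine ContinuousAt.congr ?_ this.symm
  fun_prop

lemma psi1_of_le_one {x : ℝ} (h : x ≤ 1) : psi1 x = 0 := by
  rw [psi1_eq (N := 1) (by simpa using h)]; simp

lemma harmonic_delta (n : ℕ) :
    |(∑ k ∈ Finset.Icc 1 (delta n), (1 : ℝ) / k) - psi1 n| ≤ 1 := by
  have h : (∑ k ∈ Finset.Icc 1 (delta n), (1 : ℝ) / k) = (harmonic (delta n) : ℝ) := by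
    rw [harmonic_eq_sum_Icc]; push_cast; simp
  rw [h, ← log_delta, abs_le]
  have h1 := harmonic_le_one_add_log (delta n)
  have h2 := log_add_one_le_harmonic (delta n)
  have h3 : Real.log (delta n) ≤ Real.log ((delta n + 1 : ℕ)) := by
    apply Real.log_le_log (by exact_mod_cast delta_pos n)
    push_cast; linarith
  constructor <;> linarith

/-- The error term. -/
noncomputable def err (x : ℝ) : ℝ := psi1 x - (max (x - 1) 0) ^ 2 / 2

lemma err_continuous : Continuous err := by
  unfold err
  have := psi1_continuous
  fun_prop

lemma err_of_le_one {x : ℝ} (h : x ≤ 1) : err x = 0 := by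
  unfold err
  rw [psi1_of_le_one h, max_eq_right (by linarith)]; simp

end HB

namespace HB

open Filter Topology MeasureTheory Set
open ArithmeticFunction (vonMangoldt)

lemma cpow_add_one' {x : ℂ} (s : ℂ) (hx : x ≠ 0) : x ^ (s + 1) = x ^ s * x := by
  rw [Complex.cpow_add _ _ hx, Complex.cpow_one]

lemma hasMellin_term {a : ℝ} (ha : 0 < a) {s : ℂ} (hs : 0 < s.re) :
    HasMellin (fun x : ℝ => ((max (x - a) 0 : ℝ) : ℂ)) (-s-1) ((a:ℂ)^(-s) / (s * (s+1))) := by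
  have hs0 : s ≠ 0 := by rintro rfl; simp at hs
  have hs1 : s + 1 ≠ 0 := by
    intro h
    have := congrArg Complex.re h
    simp at this; linarith
  have ha' : (a:ℂ) ≠ 0 := by exact_mod_cast ha.ne'
  have key : ∀ x : ℝ, (x:ℂ)^(-s-1-1) • ((max (x - a) 0 : ℝ) : ℂ) =
      (Ioi a).indicator (fun x : ℝ => (x:ℂ)^(-s-1) - a * (x:ℂ)^(-s-2)) x := by
    intro x
    by_cases hx : a < x
    · rw [indicator_of_mem (mem_Ioi.mpr hx), max_eq_left (by linarith)]
      have hx0 : (x:ℂ) ≠ 0 := by exact_mod_cast (ha.trans hx).ne'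
      have : (x:ℂ)^(-s-1) = (x:ℂ)^(-s-2) * x := by
        rw [← cpow_add_one' _ hx0]; ring_nf
      rw [this]
      push_cast
      rw [show -s-1-1 = -s-2 by ring, smul_eq_mul]
      ring
    · rw [indicator_of_notMem (by simpa using hx), max_eq_right (by linarith)]
      simp
  have i1 : IntegrableOn (fun x : ℝ => (x:ℂ)^(-s-1)) (Ioi a) :=
    integrableOn_Ioi_cpow_of_lt (by simp; linarith) ha
  have i2 : IntegrableOn (fun x : ℝ => a * (x:ℂ)^(-s-2)) (Ioi a) :=
    (integrableOn_Ioi_cpow_of_lt (by simp; linarith) ha).const_mul _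
  have hsub : Ioi (0:ℝ) ∩ Ioi a = Ioi a := by
    rw [inter_eq_right]; exact Ioi_subset_Ioi ha.le
  constructor
  · unfold MellinConvergent
    simp_rw [key]
    rw [integrableOn_congr_fun (fun x _ => rfl) measurableSet_Ioi]
    refine Integrable.integrableOn ?_
    rw [integrable_indicator_iff measurableSet_Ioi]
    exact i1.sub i2
  · unfold mellin
    simp_rw [key]
    rw [setIntegral_indicator measurableSet_Ioi, hsub, integral_sub i1 i2, integral_const_mul,
      integral_Ioi_cpow_of_lt (by simp; linarith) ha, integral_Ioi_cpow_of_lt (by simp; linarith) ha]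
    have : (a:ℂ)^(-s) = (a:ℂ)^(-s-2+1) * a := by
      rw [← cpow_add_one' _ ha']; ring_nf
    rw [show -s-1+1 = -s by ring, this]
    have h3 : -s-2+1 ≠ 0 := by
      intro h; apply hs1; linear_combination -h
    have h4 : -s ≠ 0 := neg_ne_zero.mpr hs0
    field_simp
    ring

lemma hasMellin_quad {s : ℂ} (hs : 1 < s.re) :
    HasMellin (fun x : ℝ => (((max (x - 1) 0)^2/2 : ℝ) : ℂ)) (-s-1) (1 / ((s-1) * (s * (s+1)))) := by
  have hs0 : s ≠ 0 := by rintro rfl; simp at hs; linarith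
  have hs1 : s + 1 ≠ 0 := by
    intro h
    have := congrArg Complex.re h
    simp at this; linarith
  have hs2 : s - 1 ≠ 0 := by
    intro h
    have := congrArg Complex.re h
    simp at this; linarith
  have key : ∀ x : ℝ, (x:ℂ)^(-s-1-1) • (((max (x - 1) 0)^2/2 : ℝ) : ℂ) =
      (Ioi 1).indicator (fun x : ℝ => (1/2) * (x:ℂ)^(-s) - (x:ℂ)^(-s-1) + (1/2) * (x:ℂ)^(-s-2)) x := by
    intro x
    by_cases hx : 1 < x
    · rw [indicator_of_mem (mem_Ioi.mpr hx), max_eq_left (by linarith)]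
      have hx0 : (x:ℂ) ≠ 0 := by exact_mod_cast (one_pos.trans hx).ne'
      have h1 : (x:ℂ)^(-s-1) = (x:ℂ)^(-s-2) * x := by
        rw [← cpow_add_one' _ hx0]; ring_nf
      have h2 : (x:ℂ)^(-s) = (x:ℂ)^(-s-1) * x := by
        rw [← cpow_add_one' _ hx0]; ring_nf
      rw [h2, h1]
      push_cast
      rw [show -s-1-1 = -s-2 by ring, smul_eq_mul]
      ring
    · rw [indicator_of_notMem (by simpa using hx), max_eq_right (by linarith)]
      simp
  have i0 : IntegrableOn (fun x : ℝ => (1/2) * (x:ℂ)^(-s)) (Ioi 1) :=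
    (integrableOn_Ioi_cpow_of_lt (by simp; linarith) one_pos).const_mul _
  have i1 : IntegrableOn (fun x : ℝ => (x:ℂ)^(-s-1)) (Ioi 1) :=
    integrableOn_Ioi_cpow_of_lt (by simp; linarith) one_pos
  have i2 : IntegrableOn (fun x : ℝ => (1/2) * (x:ℂ)^(-s-2)) (Ioi 1) :=
    (integrableOn_Ioi_cpow_of_lt (by simp; linarith) one_pos).const_mul _
  have hsub : Ioi (0:ℝ) ∩ Ioi 1 = Ioi 1 := by
    rw [inter_eq_right]; exact Ioi_subset_Ioi zero_le_one
  constructor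
  · unfold MellinConvergent
    simp_rw [key]
    refine Integrable.integrableOn ?_
    rw [integrable_indicator_iff measurableSet_Ioi]
    exact (i0.sub i1).add i2
  · unfold mellin
    simp_rw [key]
    rw [setIntegral_indicator measurableSet_Ioi, hsub]
    have e1 := integral_add (i0.sub i1) i2
    have e2 := integral_sub i0 i1
    simp only [Pi.sub_apply] at e1
    rw [e1, e2, integral_const_mul, integral_const_mul,
      integral_Ioi_cpow_of_lt (by simp; linarith) one_pos,
      integral_Ioi_cpow_of_lt (by simp; linarith) one_pos,
      integral_Ioi_cpow_of_lt (by simp; linarith) one_pos]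
    simp only [Complex.ofReal_one, Complex.one_cpow]
    rw [show -s+1 = -(s-1) by ring, show -s-1+1 = -s by ring, show -s-2+1 = -(s+1) by ring]
    field_simp
    ring

lemma psi1_le (x : ℝ) (hx : 0 ≤ x) : psi1 x ≤ (Real.log 4 + 4) * x ^ 2 := by
  have h := Chebyshev.psi_le_const_mul_self hx
  have h1 : psi1 x ≤ Chebyshev.psi x * x := by
    rw [psi1_eq (N := ⌊x⌋₊ + 1) (by push_cast; exact (Nat.lt_floor_add_one x).le), Chebyshev.psi_eq_sum_Icc,
      Finset.sum_mul]
    have : Finset.Icc 0 ⌊x⌋₊ = Finset.range (⌊x⌋₊ + 1) := by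
      ext; simp
    rw [this]
    gcongr with k hk
    exact max_le (by linarith [(Nat.cast_nonneg k : (0:ℝ) ≤ k)]) hx
  nlinarith

lemma err_bigO : (fun x => (err x : ℂ)) =O[atTop] (fun x : ℝ => x ^ (-(-2 : ℝ))) := by
  apply Asymptotics.IsBigO.of_bound (Real.log 4 + 4 + 1)
  filter_upwards [eventually_ge_atTop 1] with x hx
  rw [neg_neg, Real.rpow_two, Complex.norm_real, Real.norm_eq_abs, Real.norm_eq_abs,
    abs_of_nonneg (sq_nonneg x)]
  have h1 := psi1_le x (by linarith)
  have h0 := psi1_nonneg x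
  unfold err
  rw [max_eq_left (by linarith), abs_le]
  have h4 : 0 ≤ Real.log 4 := Real.log_nonneg (by norm_num)
  have h5 : 0 ≤ Real.log 4 * x^2 := by positivity
  constructor <;> nlinarith

lemma err_locInt : LocallyIntegrableOn (fun x => (err x : ℂ)) (Ioi 0) :=
  (Complex.continuous_ofReal.comp err_continuous).locallyIntegrable.locallyIntegrableOn _

lemma err_bot (b : ℝ) : (fun x => (err x : ℂ)) =O[𝓝[>] 0] (fun x : ℝ => x ^ (-b)) := by
  have : (fun x => (err x : ℂ)) =ᶠ[𝓝[>] 0] fun _ => 0 := by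
    filter_upwards [nhdsWithin_le_nhds (Iic_mem_nhds (zero_lt_one' ℝ))] with x hx
    rw [err_of_le_one hx]; simp
  exact this.trans_isBigO (Asymptotics.isBigO_zero _ _)

lemma err_mellinConvergent {s : ℂ} (hs : 1 < s.re) :
    MellinConvergent (fun x => (err x : ℂ)) (-s-1) :=
  mellinConvergent_of_isBigO_rpow err_locInt err_bigO (by simp; linarith)
    (err_bot (-s.re-2)) (by simp)

lemma logDeriv_zeta {s : ℂ} (hs : s ≠ 1) (h0 : riemannZeta s ≠ 0) :
    -deriv riemannZeta s / riemannZeta s = 1 / (s-1) - logDeriv riemannZeta₁ s := by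
  rw [logDeriv_apply]
  have h1 := deriv_riemannZeta_eq_neg_inv_sub_sq_mul_add hs
  have h2 := riemannZeta_eq_inv_sub_mul hs
  have h3 : riemannZeta₁ s ≠ 0 := by
    intro h; rw [h] at h2; exact h0 (by simpa using h2)
  have h4 : s - 1 ≠ 0 := sub_ne_zero.mpr hs
  rw [h1, h2]
  field_simp
  ring

lemma mellin_psi1 {s : ℂ} (hs : 1 < s.re) :
    mellin (fun x => (psi1 x : ℂ)) (-s-1) =
      (-deriv riemannZeta s / riemannZeta s) / (s * (s+1)) := by
  have hσ : 0 < s.re := by linarith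
  set F : ℕ → ℝ → ℂ := fun k x => (x:ℂ)^(-s-1-1) • ((vonMangoldt k * max (x - k) 0 : ℝ) : ℂ) with hF
  have hval : ∀ k, ∀ z : ℂ, 0 < z.re → HasMellin (fun x : ℝ => ((vonMangoldt k * max (x - k) 0 : ℝ) : ℂ)) (-z-1)
      (LSeries.term (fun n => (vonMangoldt n : ℂ)) z k / (z * (z+1))) := by
    intro k z hz
    rcases Nat.eq_zero_or_pos k with rfl | hk
    · have : (fun x : ℝ => ((vonMangoldt 0 * max (x - (0:ℕ)) 0 : ℝ) : ℂ)) = fun _ => 0 := by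
        ext; simp
      rw [this]
      constructor
      · simp [MellinConvergent, IntegrableOn]
      · simp [mellin]
    · have h := hasMellin_term (a := k) (by exact_mod_cast hk) hz
      have e : (fun x : ℝ => ((vonMangoldt k * max (x - k) 0 : ℝ) : ℂ)) =
          fun x : ℝ => (vonMangoldt k : ℂ) • ((max (x - k) 0 : ℝ) : ℂ) := by
        ext; simp
      rw [e]
      have h2 := hasMellin_const_smul h.1 (vonMangoldt k : ℂ)
      refine ⟨h2.1, ?_⟩
      rw [h2.2, h.2, LSeries.term_of_ne_zero hk.ne', smul_eq_mul, Complex.cpow_neg]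
      simp [div_eq_mul_inv]
      ring
  have hintg : ∀ k, Integrable (F k) (volume.restrict (Ioi 0)) := fun k => (hval k s hσ).1
  have hnorm : ∀ k, ∫ x in Ioi 0, ‖F k x‖ = ‖LSeries.term (fun n => (vonMangoldt n : ℂ)) s k‖ / (s.re * (s.re+1)) := by
    intro k
    have h := (hval k (s.re : ℂ) (by simpa using hσ)).2
    have e : mellin (fun x : ℝ => ((vonMangoldt k * max (x - k) 0 : ℝ) : ℂ)) (-(s.re:ℂ)-1) =
        ((∫ x in Ioi 0, ‖F k x‖ : ℝ) : ℂ) := by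
      rw [mellin, ← integral_complex_ofReal]
      refine setIntegral_congr_fun measurableSet_Ioi fun x hx => ?_
      have hx : 0 < x := hx
      simp only [hF]
      rw [norm_smul, Complex.norm_cpow_eq_rpow_re_of_pos hx, Complex.norm_real, Real.norm_of_nonneg
        (mul_nonneg ArithmeticFunction.vonMangoldt_nonneg (le_max_right _ _)), smul_eq_mul]
      have : (-s-1-1).re = -s.re-1-1 := by simp
      rw [this]
      push_cast
      rw [Complex.ofReal_cpow hx.le]
      push_cast; rfl
    rw [h] at e
    have e2 := congrArg Complex.re e
    rw [Complex.ofReal_re] at e2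
    rw [← e2]
    rcases Nat.eq_zero_or_pos k with rfl | hk
    · simp
    · rw [LSeries.term_of_ne_zero hk.ne', LSeries.term_of_ne_zero hk.ne', norm_div,
        Complex.norm_natCast_cpow_of_pos hk, Complex.norm_real, Real.norm_of_nonneg
        ArithmeticFunction.vonMangoldt_nonneg]
      have : ((k:ℂ)^(s.re:ℂ)) = (((k:ℝ)^s.re : ℝ) : ℂ) := by
        rw [Complex.ofReal_cpow (Nat.cast_nonneg k)]; simp
      rw [this]
      norm_cast
  have hsummable : Summable fun k => ∫ x in Ioi 0, ‖F k x‖ := by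
    simp_rw [hnorm]
    exact (ArithmeticFunction.LSeriesSummable_vonMangoldt hs).norm.div_const _
  have main := hasSum_integral_of_summable_integral_norm hintg hsummable
  have e1 : mellin (fun x => (psi1 x : ℂ)) (-s-1) = ∫ x in Ioi 0, ∑' k, F k x := by
    rw [mellin]
    refine setIntegral_congr_fun measurableSet_Ioi fun x hx => ?_
    simp only [hF, smul_eq_mul]
    rw [tsum_mul_left, psi1, Complex.ofReal_tsum]
  rw [e1, ← main.tsum_eq, ← ArithmeticFunction.LSeries_vonMangoldt_eq_deriv_riemannZeta_div hs, LSeries,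
    ← tsum_div_const]
  exact tsum_congr fun k => (hval k s hσ).2

lemma mellin_err {s : ℂ} (hs : 1 < s.re) :
    mellin (fun x => (err x : ℂ)) (-s-1) = -(logDeriv riemannZeta₁ s) / (s * (s+1)) := by
  have hq := hasMellin_quad hs
  have h := hasMellin_add (err_mellinConvergent hs) hq.1
  have e : (fun x => (err x : ℂ) + (((max (x - 1) 0)^2/2 : ℝ) : ℂ)) = fun x => (psi1 x : ℂ) := by
    ext x; unfold err; push_cast; ring
  rw [e] at h
  have h2 := h.2
  rw [mellin_psi1 hs, hq.2, logDeriv_zeta (by rintro rfl; simp at hs) (riemannZeta_ne_zero_of_one_lt_re hs)] at h2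
  have := sub_eq_of_eq_add h2
  rw [← this]
  have hs0 : s ≠ 0 := by rintro rfl; simp at hs; linarith
  have hs1 : s + 1 ≠ 0 := by
    intro h
    have := congrArg Complex.re h
    simp at this; linarith
  have hs2 : s - 1 ≠ 0 := by
    intro h
    have := congrArg Complex.re h
    simp at this; linarith
  field_simp
  ring
end HB

namespace HB

open Filter Topology MeasureTheory Set
open ArithmeticFunction (vonMangoldt)

/-- Half-plane `Re s > 1/2`. -/
def HP : Set ℂ := {s : ℂ | 1/2 < s.re}

lemma HP_open : IsOpen HP := isOpen_lt continuous_const Complex.continuous_re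

lemma HP_convex : Convex ℝ HP := convex_halfSpace_re_gt (1/2)

lemma G_eq (s : ℂ) (hs : s ≠ 1) : riemannZeta₁ s = (s - 1) * riemannZeta s := by
  rw [riemannZeta_eq_inv_sub_mul hs]
  have : s - 1 ≠ 0 := sub_ne_zero.mpr hs
  field_simp

lemma G_ne_zero_of_one_lt {s : ℂ} (hs : 1 < s.re) : riemannZeta₁ s ≠ 0 := by
  have h1 : s ≠ 1 := by rintro rfl; simp at hs
  rw [G_eq s h1]
  exact mul_ne_zero (sub_ne_zero.mpr h1) (riemannZeta_ne_zero_of_one_lt_re hs)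

lemma RH_of_G (h : ∀ s ∈ HP, riemannZeta₁ s ≠ 0) : RH := by
  have key : ∀ s : ℂ, riemannZeta s = 0 → 0 < s.re → s.re < 1 → s.re ≤ 1/2 := by
    intro s h0 h1 h2
    by_contra! hc
    refine h s hc ?_
    rw [G_eq s (by rintro rfl; simp at h2), h0, mul_zero]
  intro s h0 h1 h2
  refine le_antisymm (key s h0 h1 h2) ?_
  have h3 := key (1 - s) ?_ (by simpa using h2) (by simpa using h1)
  · simp at h3; linarith
  · rw [riemannZeta_one_sub, h0, mul_zero]
    · rintro n rfl
      simp at h1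
      exact absurd h1 (not_lt.mpr (Nat.cast_nonneg n))
    · rintro rfl; simp at h2

lemma G_ne_zero_of_RH (h : RH) : ∀ s ∈ HP, riemannZeta₁ s ≠ 0 := by
  intro s hs hz
  have hs : 1/2 < s.re := hs
  by_cases h1 : s = 1
  · subst h1; rw [riemannZeta₁_one] at hz; exact one_ne_zero hz
  · rw [G_eq s h1] at hz
    have hz : riemannZeta s = 0 := by
      rcases mul_eq_zero.mp hz with h2 | h2
      · exact absurd (sub_eq_zero.mp h2) h1
      · exact h2
    rcases lt_or_ge s.re 1 with h2 | h2
    · have := h s hz (by linarith) h2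
      linarith
    · exact riemannZeta_ne_zero_of_one_le_re h2 hz

lemma err_bigO' (h : ∀ n : ℕ, 0 < n →
      ((∑ k ∈ Finset.Icc 1 (delta n), (1 : ℝ) / k) - (n : ℝ) ^ 2 / 2) ^ 2
        < 36 * (n : ℝ) ^ 3) :
    (fun x => (err x : ℂ)) =O[atTop] (fun x : ℝ => x ^ (-(-(3/2) : ℝ))) := by
  have h1 : ∀ n : ℕ, 0 < n → |psi1 n - (n:ℝ)^2/2| ≤ 6 * (n:ℝ)^(3/2:ℝ) + 1 := by
    intro n hn
    have h2 := harmonic_delta n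
    have h3 : |(∑ k ∈ Finset.Icc 1 (delta n), (1 : ℝ) / k) - (n : ℝ) ^ 2 / 2| ≤ 6 * (n:ℝ)^(3/2:ℝ) := by
      apply abs_le_of_sq_le_sq _ (by positivity)
      refine (h n hn).le.trans (le_of_eq ?_)
      rw [mul_pow, ← Real.rpow_natCast ((n:ℝ)^(3/2:ℝ)), ← Real.rpow_mul (Nat.cast_nonneg n)]
      norm_num
    rw [abs_le] at *
    constructor <;> linarith
  apply Asymptotics.IsBigO.of_bound 100
  filter_upwards [eventually_ge_atTop 1] with x hx
  rw [neg_neg, Complex.norm_real, Real.norm_eq_abs, Real.norm_eq_abs,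
    abs_of_nonneg (a := x ^ (3/2:ℝ)) (Real.rpow_nonneg (by linarith) _)]
  have hn : 0 < ⌊x⌋₊ := Nat.floor_pos.mpr hx
  set n := ⌊x⌋₊ with hn'
  have hx1 : (n:ℝ) ≤ x := Nat.floor_le (by linarith)
  have hx2 : x < n + 1 := Nat.lt_floor_add_one x
  have a1 := h1 n hn
  have a2 := h1 (n+1) (by omega)
  have b1 := psi1_mono hx1
  have b2 := psi1_mono (show x ≤ ((n+1:ℕ):ℝ) by push_cast; exact hx2.le)
  have c1 : (n:ℝ)^(3/2:ℝ) ≤ x^(3/2:ℝ) := by gcongr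
  have c2 : ((n+1:ℕ):ℝ)^(3/2:ℝ) ≤ 4 * x^(3/2:ℝ) := by
    calc ((n+1:ℕ):ℝ)^(3/2:ℝ) ≤ (2*x)^(3/2:ℝ) := by
          gcongr; push_cast; linarith
      _ = 2^(3/2:ℝ) * x^(3/2:ℝ) := Real.mul_rpow (by norm_num) (by linarith)
      _ ≤ 2^(2:ℝ) * x^(3/2:ℝ) := by
          gcongr
          · norm_num
          · norm_num
      _ = 4 * x^(3/2:ℝ) := by norm_num
  have c3 : x ≤ x^(3/2:ℝ) := by
    calc x = x^(1:ℝ) := (Real.rpow_one x).symm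
      _ ≤ _ := Real.rpow_le_rpow_of_exponent_le hx (by norm_num)
  rw [abs_le] at a1 a2
  push_cast at *
  unfold err
  rw [max_eq_left (by linarith), abs_le]
  constructor <;> nlinarith

theorem RH_of_bound (h : ∀ n : ℕ, 0 < n →
      ((∑ k ∈ Finset.Icc 1 (delta n), (1 : ℝ) / k) - (n : ℝ) ^ 2 / 2) ^ 2
        < 36 * (n : ℝ) ^ 3) : RH := by
  apply RH_of_G
  set H : ℂ → ℂ := fun s => -(s * (s+1)) * mellin (fun x => (err x : ℂ)) (-s-1) with hH
  have hHd : DifferentiableOn ℂ H HP := by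
    intro s hs
    have hs : 1/2 < s.re := hs
    apply DifferentiableAt.differentiableWithinAt
    have h1 : DifferentiableAt ℂ (mellin (fun x => (err x : ℂ))) (-s-1) :=
      mellin_differentiableAt_of_isBigO_rpow err_locInt (err_bigO' h)
        (by simp; linarith) (err_bot (-s.re-2)) (by simp)
    have h2 : DifferentiableAt ℂ (fun s => mellin (fun x => (err x : ℂ)) (-s-1)) s :=
      DifferentiableAt.comp (f := fun s : ℂ => -s-1) s h1 (by fun_prop)
    exact DifferentiableAt.mul (by fun_prop) h2
  have hGa : ∀ s, AnalyticAt ℂ riemannZeta₁ s := fun s => differentiable_riemannZeta₁.analyticAt s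
  have hHa : AnalyticOnNhd ℂ H HP := hHd.analyticOnNhd HP_open
  have heq : EqOn (deriv riemannZeta₁) (H * riemannZeta₁) HP := by
    apply AnalyticOnNhd.eqOn_of_preconnected_of_eventuallyEq (z₀ := 2)
      (fun s _ => (hGa s).deriv) (hHa.mul fun s _ => hGa s) HP_convex.isPreconnected
    · simp [HP]; norm_num
    · have : {s : ℂ | 1 < s.re} ∈ 𝓝 (2:ℂ) :=
        (isOpen_lt continuous_const Complex.continuous_re).mem_nhds (by simp)
      filter_upwards [this] with s hs
      have hs : 1 < s.re := hs
      have hs0 : s ≠ 0 := by rintro rfl; simp at hs; linarith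
      have hs1 : s + 1 ≠ 0 := by
        intro h
        have := congrArg Complex.re h
        simp at this; linarith
      have := G_ne_zero_of_one_lt hs
      simp only [hH]
      rw [mellin_err hs, logDeriv_apply]
      field_simp
  intro s hs hz
  have e1 : deriv riemannZeta₁ =ᶠ[𝓝 s] H * riemannZeta₁ :=
    heq.eventuallyEq_of_mem (HP_open.mem_nhds hs)
  have o1 := (hGa s).analyticOrderAt_deriv_add_one
  have o2 := analyticOrderAt_congr e1
  rw [analyticOrderAt_mul (hHa s hs) (hGa s)] at o2
  simp only [hz, sub_zero] at o1
  have hfin : analyticOrderAt riemannZeta₁ s ≠ ⊤ := by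
    intro ht
    rw [analyticOrderAt_eq_top] at ht
    have := AnalyticOnNhd.eqOn_of_preconnected_of_eventuallyEq (f := riemannZeta₁) (g := 0) (U := univ)
      (fun s _ => hGa s) (fun s _ => analyticAt_const) isPreconnected_univ (mem_univ s) ht
    have := this (mem_univ 1)
    rw [riemannZeta₁_one] at this
    exact one_ne_zero this
  rw [o2] at o1
  generalize analyticOrderAt riemannZeta₁ s = b at *
  generalize analyticOrderAt H s = a at *
  have : b + 1 ≤ b := by
    conv_rhs => rw [← o1]
    gcongr
    exact le_add_self
  exact absurd this (not_le.mpr ((ENat.lt_add_one_iff hfin).mpr le_rfl))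
end HB

namespace HB

open Filter Topology MeasureTheory Set
open ArithmeticFunction (vonMangoldt)

/-- truncated fractional part -/
noncomputable def fr (x : ℝ) : ℂ := (Ioi (1:ℝ)).indicator (fun x => ((x - ⌊x⌋₊ : ℝ) : ℂ)) x

lemma fr_norm (x : ℝ) : ‖fr x‖ ≤ (Ioi (1:ℝ)).indicator (fun _ => 1) x := by
  unfold fr
  by_cases hx : 1 < x
  · rw [indicator_of_mem (mem_Ioi.mpr hx), indicator_of_mem (mem_Ioi.mpr hx), Complex.norm_real,
      Real.norm_eq_abs, abs_le]
    have h1 := Nat.floor_le (show 0 ≤ x by linarith)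
    have h2 := Nat.lt_floor_add_one x
    constructor <;> linarith
  · rw [indicator_of_notMem (by simpa using hx), indicator_of_notMem (by simpa using hx)]; simp

lemma fr_meas : Measurable fr := by
  unfold fr
  apply Measurable.indicator _ measurableSet_Ioi
  fun_prop

lemma fr_locInt : LocallyIntegrableOn fr (Ioi 0) := by
  apply LocallyIntegrable.locallyIntegrableOn
  refine (locallyIntegrable_const (1:ℝ)).mono fr_meas.aestronglyMeasurable (ae_of_all _ fun x => ?_)
  refine (fr_norm x).trans ?_
  simp only [norm_one]
  apply indicator_le_self' ; intros; norm_num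

lemma fr_top : fr =O[atTop] (fun x : ℝ => x ^ (-(0:ℝ))) := by
  apply Asymptotics.IsBigO.of_bound 1
  filter_upwards [eventually_gt_atTop 1] with x hx
  refine (fr_norm x).trans ?_
  rw [indicator_of_mem (mem_Ioi.mpr hx)]; simp

lemma fr_bot (b : ℝ) : fr =O[𝓝[>] 0] (fun x : ℝ => x ^ (-b)) := by
  have : fr =ᶠ[𝓝[>] 0] fun _ => 0 := by
    filter_upwards [nhdsWithin_le_nhds (Iic_mem_nhds (zero_lt_one' ℝ))] with x hx
    unfold fr
    rw [indicator_of_notMem (by simpa using hx)]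
  exact this.trans_isBigO (Asymptotics.isBigO_zero _ _)

lemma fr_mellin_norm {s : ℂ} (hs : 0 < s.re) : ‖mellin fr (-s)‖ ≤ 1 / s.re := by
  unfold mellin
  have h1 : ∫ x in Ioi (1:ℝ), x ^ (-s.re - 1) = 1 / s.re := by
    rw [integral_Ioi_rpow_of_lt (by linarith) one_pos]
    simp
  have hi : IntegrableOn (fun x : ℝ => x ^ (-s.re - 1)) (Ioi 1) :=
    integrableOn_Ioi_rpow_of_lt (by linarith) one_pos
  rw [← h1]
  have hsub : Ioi (0:ℝ) ∩ Ioi 1 = Ioi 1 := by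
    rw [inter_eq_right]; exact Ioi_subset_Ioi zero_le_one
  have h2 : ∫ x in Ioi (1:ℝ), x ^ (-s.re - 1) =
      ∫ x in Ioi (0:ℝ), (Ioi (1:ℝ)).indicator (fun x : ℝ => x ^ (-s.re - 1)) x := by
    rw [setIntegral_indicator measurableSet_Ioi, hsub]
  rw [h2]
  refine norm_integral_le_of_norm_le ?_ ?_
  · exact ((integrable_indicator_iff measurableSet_Ioi).mpr hi).integrableOn
  · filter_upwards [ae_restrict_mem measurableSet_Ioi] with x hx
    have hx : 0 < x := hx
    rw [norm_smul, Complex.norm_cpow_eq_rpow_re_of_pos hx]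
    have := fr_norm x
    by_cases hx1 : 1 < x
    · rw [indicator_of_mem (mem_Ioi.mpr hx1)] at *
      have h3 : (-s-1).re = -s.re-1 := by simp
      rw [h3]
      exact mul_le_of_le_one_right (by positivity) this
    · rw [indicator_of_notMem (by simpa using hx1)] at *
      rw [le_antisymm this (norm_nonneg _), mul_zero]

lemma zeta_fr {s : ℂ} (hs : 1 < s.re) : riemannZeta s = s / (s - 1) - s * mellin fr (-s) := by
  have h := LSeries_eq_mul_integral_of_nonneg (fun _ => 1) zero_le_one hs ?_ (fun _ => zero_le_one)
  · have e : LSeries (fun n => (((fun _ => 1 : ℕ → ℝ) n : ℝ) : ℂ)) s = riemannZeta s := by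
      have := LSeries_one_eq_riemannZeta hs
      rw [← this]; congr
    rw [e] at h
    rw [h]
    have hs1 : s - 1 ≠ 0 := by
      intro h
      have := congrArg Complex.re h
      simp at this; linarith
    have h1 : ∫ x in Ioi (1:ℝ), (x:ℂ) ^ (-s) = 1 / (s-1) := by
      rw [integral_Ioi_cpow_of_lt (by simp; linarith) one_pos]
      rw [show -s + 1 = -(s-1) by ring, Complex.ofReal_one, Complex.one_cpow]
      field_simp
    have hsub : Ioi (0:ℝ) ∩ Ioi 1 = Ioi 1 := by
      rw [inter_eq_right]; exact Ioi_subset_Ioi zero_le_one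
    have hi : IntegrableOn (fun x : ℝ => (x:ℂ) ^ (-s)) (Ioi 1) :=
      integrableOn_Ioi_cpow_of_lt (by simp; linarith) one_pos
    have hm : MellinConvergent fr (-s) :=
      mellinConvergent_of_isBigO_rpow fr_locInt fr_top (by simp; linarith)
        (fr_bot (-s.re-2)) (by simp)
    have hm' : IntegrableOn (fun x : ℝ => (x:ℂ) ^ (-s-1) • fr x) (Ioi 1) :=
      IntegrableOn.mono_set hm (Ioi_subset_Ioi zero_le_one)
    have h2 : mellin fr (-s) = ∫ x in Ioi (1:ℝ), (x:ℂ) ^ (-s-1) • fr x := by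
      unfold mellin
      conv_rhs => rw [← hsub, ← setIntegral_indicator measurableSet_Ioi]
      refine setIntegral_congr_fun measurableSet_Ioi fun x hx => ?_
      by_cases hx1 : 1 < x
      · rw [indicator_of_mem (mem_Ioi.mpr hx1)]
      · rw [indicator_of_notMem (by simpa using hx1), fr, indicator_of_notMem (by simpa using hx1), smul_zero]
    have h3 : ∫ t in Ioi (1:ℝ), (∑ k ∈ Finset.Icc 1 ⌊t⌋₊, ((1:ℝ):ℂ)) * (t:ℂ)^(-(s+1)) =
        1 / (s-1) - mellin fr (-s) := by
      rw [h2, ← h1, ← integral_sub hi hm']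
      refine setIntegral_congr_fun measurableSet_Ioi fun x hx => ?_
      have hx : 1 < x := hx
      have hx0 : (x:ℂ) ≠ 0 := by exact_mod_cast (one_pos.trans hx).ne'
      rw [fr, indicator_of_mem (mem_Ioi.mpr hx), show -s = (-s-1)+1 by ring, cpow_add_one' _ hx0]
      simp
      rw [show -1 + -s = -s-1 by ring]
      ring
    rw [h3]; field_simp
  · apply Asymptotics.IsBigO.of_bound 1
    filter_upwards with n
    simp

lemma G_fr {s : ℂ} (hs : 0 < s.re) : riemannZeta₁ s = s - s * (s - 1) * mellin fr (-s) := by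
  have : EqOn riemannZeta₁ (fun s => s - s * (s - 1) * mellin fr (-s)) {s : ℂ | 0 < s.re} := by
    have ho : IsOpen {s : ℂ | 0 < s.re} := isOpen_lt continuous_const Complex.continuous_re
    apply AnalyticOnNhd.eqOn_of_preconnected_of_eventuallyEq (z₀ := 2)
      (fun s _ => differentiable_riemannZeta₁.analyticAt s) _
      (convex_halfSpace_re_gt 0).isPreconnected
    · simp
    · have : {s : ℂ | 1 < s.re} ∈ 𝓝 (2:ℂ) :=
        (isOpen_lt continuous_const Complex.continuous_re).mem_nhds (by simp)
      filter_upwards [this] with s hs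
      have hs : 1 < s.re := hs
      have hs1 : s ≠ 1 := by rintro rfl; simp at hs
      rw [G_eq s hs1, zeta_fr hs]
      have : s - 1 ≠ 0 := sub_ne_zero.mpr hs1
      field_simp
    · apply DifferentiableOn.analyticOnNhd _ ho
      intro s hs
      have hs : 0 < s.re := hs
      apply DifferentiableAt.differentiableWithinAt
      have h1 : DifferentiableAt ℂ (mellin fr) (-s) :=
        mellin_differentiableAt_of_isBigO_rpow fr_locInt fr_top
          (by simp; linarith) (fr_bot (-s.re-2)) (by simp)
      have h2 : DifferentiableAt ℂ (fun s => mellin fr (-s)) s :=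
        DifferentiableAt.comp (f := fun s : ℂ => -s) s h1 (by fun_prop)
      exact DifferentiableAt.sub (by fun_prop) (DifferentiableAt.mul (by fun_prop) h2)
  exact this hs

lemma G_bound {s : ℂ} (hs : 1/4 ≤ s.re) : ‖riemannZeta₁ s‖ ≤ 5 * (1 + ‖s‖)^2 := by
  have h0 : 0 < s.re := by linarith
  rw [G_fr h0]
  have h1 := fr_mellin_norm h0
  have h2 : 1 / s.re ≤ 4 := by
    rw [div_le_iff₀ h0]; linarith
  have h3 : ‖s - 1‖ ≤ ‖s‖ + 1 := by simpa using norm_sub_le s 1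
  calc ‖s - s * (s - 1) * mellin fr (-s)‖ ≤ ‖s‖ + ‖s * (s - 1) * mellin fr (-s)‖ := norm_sub_le _ _
    _ ≤ ‖s‖ + ‖s‖ * (‖s‖ + 1) * 4 := by
        rw [norm_mul, norm_mul]
        gcongr
        linarith
    _ ≤ _ := by nlinarith [norm_nonneg s]

end HB

namespace HB

open scoped Real
open Filter Topology MeasureTheory Set
open ArithmeticFunction (vonMangoldt)

lemma zeta_lower {s : ℂ} (hs : 2 ≤ s.re) : 1/4 ≤ ‖riemannZeta s‖ := by
  have hs1 : 1 < s.re := by linarith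
  rw [zeta_eq_tsum_one_div_nat_add_one_cpow hs1]
  have h2 : HasSum (fun n : ℕ => 1 / ((n:ℝ)+1)^2) (π^2/6) := by
    have := hasSum_zeta_two
    rw [← hasSum_nat_add_iff' 1] at this
    simpa using this
  have h3 : HasSum (fun n : ℕ => 1 / ((n:ℝ)+2)^2) (π^2/6 - 1) := by
    rw [← hasSum_nat_add_iff' 1] at h2
    simp at h2
    have e : (fun n : ℕ => 1 / ((n:ℝ)+2)^2) = fun n : ℕ => (((n:ℝ)+1+1)^2)⁻¹ := by
      ext n; rw [one_div]; ring
    rw [e]; exact h2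
  have hb : ∀ n : ℕ, ‖1 / ((n:ℂ)+1)^s‖ ≤ 1 / ((n:ℝ)+1)^2 := by
    intro n
    have : ((n:ℂ)+1) = ((n+1:ℕ):ℂ) := by push_cast; rfl
    rw [norm_div, norm_one, this, Complex.norm_natCast_cpow_of_pos (Nat.succ_pos n)]
    push_cast
    gcongr
    rw [← Real.rpow_two]
    exact Real.rpow_le_rpow_of_exponent_le (by linarith [(Nat.cast_nonneg n : (0:ℝ) ≤ n)]) hs
  have hsum : Summable (fun n : ℕ => 1 / ((n:ℂ)+1)^s) := Summable.of_norm_bounded h2.summable hb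
  rw [hsum.tsum_eq_zero_add]
  have h4 : ‖∑' n : ℕ, 1 / (((n+1:ℕ):ℂ)+1)^s‖ ≤ π^2/6 - 1 := by
    apply tsum_of_norm_bounded h3
    intro n
    refine (hb (n+1)).trans (le_of_eq ?_)
    push_cast
    ring
  have h5 : ‖(1:ℂ)‖ - ‖∑' n : ℕ, 1 / (((n+1:ℕ):ℂ)+1)^s‖ ≤ ‖1 + ∑' n : ℕ, 1 / (((n+1:ℕ):ℂ)+1)^s‖ :=
    norm_sub_le_norm_add _ _
  rw [norm_one] at h5
  have h6 : π^2 ≤ 10 := by nlinarith [Real.pi_lt_d2, Real.pi_pos]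
  simp only [Nat.cast_zero, zero_add, Complex.one_cpow, div_one]
  linarith

lemma G_lower {s : ℂ} (hs : 2 ≤ s.re) : 1/4 ≤ ‖riemannZeta₁ s‖ := by
  rw [G_eq s (by rintro rfl; simp at hs), norm_mul]
  have h1 := zeta_lower hs
  have h2 : 1 ≤ ‖s - 1‖ := by
    refine le_trans ?_ (Complex.re_le_norm (s-1))
    simp; linarith
  nlinarith

lemma bc_abstract {G : ℂ → ℂ} {c : ℂ} {M R : ℝ} (hR : 0 < R) (hM : 0 < M)
    (hd : DifferentiableOn ℂ G (Metric.ball c R)) (hnz : ∀ z ∈ Metric.ball c R, G z ≠ 0)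
    (hle : ∀ z ∈ Metric.ball c R, ‖G z‖ ≤ ‖G c‖ * Real.exp M) :
    ∃ L : ℂ → ℂ, (∀ z ∈ Metric.ball c R, HasDerivAt L (logDeriv G z) z) ∧
      (∀ z ∈ Metric.ball c R, G z = G c * Complex.exp (L z)) ∧
      (∀ z ∈ Metric.ball c R, ‖L z‖ ≤ 2 * M * ‖z - c‖ / (R - ‖z - c‖)) := by
  have hc : c ∈ Metric.ball c R := Metric.mem_ball_self hR
  have hdl : DifferentiableOn ℂ (logDeriv G) (Metric.ball c R) := by
    have : DifferentiableOn ℂ (deriv G) (Metric.ball c R) := hd.deriv Metric.isOpen_ball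
    exact this.div hd hnz
  obtain ⟨L, hL0, hL⟩ := hdl.isExactOn_ball.with_val_at c 0
  have hGL : ∀ z ∈ Metric.ball c R, G z = G c * Complex.exp (L z) := by
    intro z hz
    have hder : ∀ w ∈ Metric.ball c R, HasDerivAt (fun w => G w * Complex.exp (-L w)) 0 w := by
      intro w hw
      have h1 : HasDerivAt G (deriv G w) w := (hd.differentiableAt (Metric.isOpen_ball.mem_nhds hw)).hasDerivAt
      have h2 := h1.mul ((hL w hw).neg.cexp)
      have h3 : deriv G w * Complex.exp ((-L) w) + G w * (Complex.exp ((-L) w) * -logDeriv G w) = 0 := by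
        rw [logDeriv_apply]
        have := hnz w hw
        field_simp
        simp
      rw [h3] at h2
      exact h2
    have := Metric.isOpen_ball.is_const_of_deriv_eq_zero (convex_ball c R).isPreconnected
      (f := fun w => G w * Complex.exp (-L w))
      (fun w hw => (hder w hw).differentiableAt.differentiableWithinAt)
      (fun w hw => (hder w hw).deriv) hz hc
    simp only [hL0, neg_zero, Complex.exp_zero, mul_one] at this
    rw [← this, mul_assoc, ← Complex.exp_add]
    simp
  refine ⟨L, hL, hGL, ?_⟩
  intro z hz
  have hmem : ∀ w ∈ Metric.ball (0:ℂ) R, c + w ∈ Metric.ball c R := by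
    intro w hw; simpa [dist_eq_norm] using hw
  have := Complex.borelCaratheodory_zero (f := fun w => L (c + w)) (z := z - c) hM ?_ ?_ hR ?_ ?_
  · simpa using this
  · intro w hw
    have h1 := (hL _ (hmem w hw)).differentiableAt
    exact (DifferentiableAt.comp (f := fun w : ℂ => c + w) w h1 (by fun_prop)).differentiableWithinAt
  · intro w hw
    have h1 := hGL _ (hmem w hw)
    have h2 := hle _ (hmem w hw)
    rw [h1, norm_mul, Complex.norm_exp] at h2
    have h3 : 0 < ‖G c‖ := norm_pos_iff.mpr (hnz c hc)
    exact Real.exp_le_exp.mp (le_of_mul_le_mul_left h2 h3)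
  · simpa [dist_eq_norm] using hz
  · simpa using hL0

lemma log_aux {u : ℝ} (hu : 4 ≤ u) : 20 * u ^ 2 ≤ Real.exp (16 * √u) := by
  have hv : 2 ≤ √u := Real.le_sqrt_of_sq_le (by linarith)
  have hu2 : u = √u ^ 2 := (Real.sq_sqrt (by linarith)).symm
  set v := √u
  have h1 : 0 < v := by linarith
  have h2 : v ≤ Real.exp v := by linarith [Real.add_one_le_exp v]
  have h3 : (20:ℝ) ≤ Real.exp 19 := by linarith [Real.add_one_le_exp (19:ℝ)]
  calc 20 * u^2 = 20 * v^4 := by rw [hu2]; ring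
    _ ≤ Real.exp 19 * (Real.exp v)^4 := by gcongr
    _ = Real.exp (19 + 4 * v) := by rw [Real.exp_add, mul_comm 4 v, Real.exp_mul]; norm_cast
    _ ≤ _ := by apply Real.exp_le_exp.mpr; linarith

lemma G_log (hG : ∀ s ∈ HP, riemannZeta₁ s ≠ 0) {h : ℝ} (h0 : 0 < h) (hh : h ≤ 3/2) {s : ℂ}
    (hs : 1/2 + h ≤ s.re) :
    ‖logDeriv riemannZeta₁ s‖ ≤ 192 / h^2 * √(4 + ‖s‖) ∧
    ‖riemannZeta₁ s‖⁻¹ ≤ 4 * Real.exp (48 / h * √(4 + ‖s‖)) := by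
  set c : ℂ := ⟨max 2 s.re, s.im⟩ with hc
  have hcre : 2 ≤ c.re := le_max_left _ _
  have hsc : ‖s - c‖ ≤ 3/2 - h := by
    have : s - c = ((s.re - max 2 s.re : ℝ) : ℂ) := by
      apply Complex.ext <;> simp [hc]
    rw [this, Complex.norm_real, Real.norm_eq_abs]
    rcases le_total 2 s.re with h2 | h2
    · rw [max_eq_right h2]; simp; linarith
    · rw [max_eq_left h2, abs_of_nonpos (by linarith)]; linarith
  have hball : Metric.ball c (3/2) ⊆ HP := by
    intro z hz
    have h1 : ‖z - c‖ < 3/2 := by simpa [dist_eq_norm] using hz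
    have h2 := (Complex.abs_re_le_norm (z-c))
    have h3 := neg_abs_le (z-c).re
    simp only [Complex.sub_re] at h2 h3
    show 1/2 < z.re
    linarith
  have hcl := G_lower hcre
  set u := 4 + ‖s‖ with hu
  have hu4 : 4 ≤ u := by linarith [norm_nonneg s]
  have hupos : 0 < √u := Real.sqrt_pos.mpr (by linarith)
  obtain ⟨L, hL, hGL, hLb⟩ := bc_abstract (G := riemannZeta₁) (c := c) (M := 16 * √u) (R := 3/2)
    (by norm_num) (by positivity)
    differentiable_riemannZeta₁.differentiableOn (fun z hz => hG z (hball hz)) (by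
      intro z hz
      have h1 : ‖z - c‖ < 3/2 := by simpa [dist_eq_norm] using hz
      have hz2 : 1/2 < z.re := hball hz
      have h2 : ‖z‖ ≤ ‖s‖ + 3 := by
        have : z = (z - c) - (s - c) + s := by ring
        rw [this]
        calc _ ≤ ‖z - c‖ + ‖s - c‖ + ‖s‖ := (norm_add_le _ _).trans (by gcongr; exact norm_sub_le _ _)
          _ ≤ _ := by linarith
      calc ‖riemannZeta₁ z‖ ≤ 5 * (1 + ‖z‖)^2 := G_bound (by linarith)
        _ ≤ 5 * u^2 := by gcongr; linarith
        _ = 1/4 * (20 * u^2) := by ring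
        _ ≤ _ := by gcongr; exact log_aux hu4)
  have hsb : ∀ k : ℝ, 0 ≤ k → k < h → ∀ z, ‖z - s‖ ≤ k → z ∈ Metric.ball c (3/2) ∧ ‖L z‖ ≤ 48 / (h - k) * √u := by
    intro k hk0 hk z hz
    have h1 : ‖z - c‖ ≤ 3/2 - (h - k) := by
      have : z - c = (z - s) + (s - c) := by ring
      rw [this]
      refine (norm_add_le _ _).trans (by linarith)
    have hzb : z ∈ Metric.ball c (3/2) := by
      simp only [Metric.mem_ball, dist_eq_norm]; linarith
    refine ⟨hzb, (hLb z hzb).trans ?_⟩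
    calc 2 * (16 * √u) * ‖z - c‖ / (3/2 - ‖z-c‖) ≤ 2 * (16 * √u) * (3/2) / (h - k) := by
          have a1 : 0 < h - k := by linarith
          have a2 : h - k ≤ 3/2 - ‖z - c‖ := by linarith
          apply div_le_div₀ (by positivity) _ a1 a2
          gcongr
          linarith
      _ = _ := by ring
  constructor
  · have hs1 := hsb 0 le_rfl h0 s (by simp)
    rw [← (hL s hs1.1).deriv]
    have := Complex.norm_deriv_le_of_forall_mem_sphere_norm_le (f := L) (c := s) (R := h/2) (C := 96 / h * √u) (by linarith) ?_ ?_
    · refine this.trans (le_of_eq ?_)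
      field_simp; norm_num
    · apply DifferentiableOn.diffContOnCl
      intro z hz
      have hz' : z ∈ Metric.closedBall s (h/2) := Metric.closure_ball_subset_closedBall hz
      have := hsb (h/2) (by linarith) (by linarith) z (by simpa [dist_eq_norm] using hz')
      exact (hL z this.1).differentiableAt.differentiableWithinAt
    · intro z hz
      have := (hsb (h/2) (by linarith) (by linarith) z (by rw [mem_sphere_iff_norm] at hz; exact hz.le)).2
      refine this.trans (le_of_eq ?_)
      field_simp; norm_num
  · have hs1 := hsb 0 le_rfl h0 s (by simp)
    rw [hGL s hs1.1, norm_mul, mul_inv, Complex.norm_exp, ← Real.exp_neg]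
    have h3 : -(L s).re ≤ 48 / h * √u := by
      have := hs1.2
      rw [sub_zero] at this
      exact ((neg_le_abs _).trans (Complex.abs_re_le_norm _)).trans this
    have h4 : ‖riemannZeta₁ c‖⁻¹ ≤ 4 := by
      rw [inv_le_comm₀ (by linarith) (by norm_num)]; linarith
    gcongr

end HB

namespace HB

open scoped Real
open Filter Topology MeasureTheory Set
open ArithmeticFunction (vonMangoldt)

/-- upper bound for `Γ(a)/Γ(a+h)` -/
lemma gamma_ratio_bdd {a : ℂ} (ha : 1 ≤ a.re) {h : ℝ} (h0 : 0 < h) :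
    ‖Complex.Gamma a‖ ≤ (1 / h / ‖Complex.Gamma h‖) * ‖Complex.Gamma (a + h)‖ := by
  have e := Complex.Gamma_mul_Gamma_eq_betaIntegral (s := a) (t := (h:ℂ)) (by linarith) (by simpa using h0)
  have hg : 0 < ‖Complex.Gamma h‖ :=
    norm_pos_iff.mpr (Complex.Gamma_ne_zero_of_re_pos (by simpa using h0))
  have hb : ‖Complex.betaIntegral a h‖ ≤ 1 / h := by
    unfold Complex.betaIntegral
    have hi : IntervalIntegrable (fun x : ℝ => (1 - x) ^ (h - 1)) volume 0 1 := by
      have := (intervalIntegral.intervalIntegrable_rpow' (a := 0) (b := 1) (r := h - 1) (by linarith)).comp_sub_left 1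
      simpa using this.symm
    have hv : ∫ x in (0:ℝ)..1, (1 - x) ^ (h - 1) = 1 / h := by
      rw [intervalIntegral.integral_comp_sub_left (fun x => x ^ (h-1)) 1]
      simp
      rw [integral_rpow (Or.inl (by linarith))]
      simp [h0.ne']
    rw [← hv]
    refine intervalIntegral.norm_integral_le_of_norm_le zero_le_one ?_ hi
    filter_upwards [Measure.ae_ne volume 1] with x hx1 hx
    have hx0 : 0 < x := hx.1
    have hx1 : x < 1 := lt_of_le_of_ne hx.2 hx1
    have e1 : (1 - (x:ℂ)) = ((1 - x : ℝ) : ℂ) := by push_cast; rfl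
    rw [norm_mul, Complex.norm_cpow_eq_rpow_re_of_pos hx0, e1,
      Complex.norm_cpow_eq_rpow_re_of_pos (by linarith)]
    have : x ^ (a - 1).re ≤ 1 := Real.rpow_le_one hx0.le hx1.le (by simpa using ha)
    have e2 : ((h:ℂ) - 1).re = h - 1 := by simp
    rw [e2]
    exact mul_le_of_le_one_left (Real.rpow_nonneg (by linarith) _) this
  have e2 := congrArg norm e
  rw [norm_mul, norm_mul] at e2
  have : ‖Complex.Gamma a‖ = ‖Complex.Gamma (a + h)‖ * ‖Complex.betaIntegral a h‖ / ‖Complex.Gamma h‖ := by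
    rw [← e2]; field_simp
  rw [this]
  calc _ ≤ ‖Complex.Gamma (a + h)‖ * (1/h) / ‖Complex.Gamma h‖ := by gcongr
    _ = _ := by ring

lemma log_term {w : ℂ} (hw : 1 ≤ w.re) {h : ℝ} (h0 : 0 < h) (h1 : h ≤ 1) :
    h * (Real.log ‖w + 1‖ - Real.log ‖w‖) ≤
      (Real.log ‖w + h‖ - Real.log ‖w‖) + h * (1/2 + 5 * h) / ‖w‖^2 := by
  have hr : 1 ≤ ‖w‖ := hw.trans (Complex.re_le_norm w)
  have hx : w.re ≤ ‖w‖ := Complex.re_le_norm w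
  have key : ∀ t : ℝ, 0 ≤ t → Real.log ‖w + t‖ - Real.log ‖w‖ = 1/2 * Real.log (1 + (2 * t * w.re + t^2)/‖w‖^2) := by
    intro t ht
    have h2 : 1 + (2 * t * w.re + t^2)/‖w‖^2 = (‖w + t‖ / ‖w‖)^2 := by
      have : ‖w + t‖^2 = ‖w‖^2 + (2 * t * w.re + t^2) := by
        rw [Complex.sq_norm, Complex.sq_norm, Complex.normSq_apply, Complex.normSq_apply]
        simp; ring
      rw [div_pow, this]
      field_simp
    have h3 : w + t ≠ 0 := by
      intro h
      have := congrArg Complex.re h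
      simp at this; linarith
    have h4 : 0 < ‖w + t‖ := norm_pos_iff.mpr h3
    rw [h2, Real.log_pow, Real.log_div h4.ne' (by linarith)]
    push_cast; ring
  have k1 := key 1 zero_le_one
  have k2 := key h h0.le
  rw [Complex.ofReal_one] at k1
  rw [k1, k2]
  set r := ‖w‖
  set x := w.re
  have u1 : Real.log (1 + (2 * 1 * x + 1^2)/r^2) ≤ (2 * x + 1)/r^2 := by
    have := Real.log_le_sub_one_of_pos (show 0 < 1 + (2 * 1 * x + 1^2)/r^2 by positivity)
    refine this.trans (le_of_eq (by ring))
  set y := (2 * h * x + h^2)/r^2 with hy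
  have hy0 : 0 ≤ y := by positivity
  have hy3 : y ≤ 3 * h / r := by
    rw [hy, div_le_div_iff₀ (by positivity) (by positivity)]
    have : 2 * h * x + h^2 ≤ 3 * h * r := by nlinarith
    nlinarith
  have u2 : y - y^2 ≤ Real.log (1 + y) := by
    have := Real.one_sub_inv_le_log_of_pos (show 0 < 1 + y by positivity)
    refine le_trans ?_ this
    have : 1 - (1+y)⁻¹ = y / (1+y) := by field_simp; ring
    rw [this, le_div_iff₀ (by positivity)]
    nlinarith [pow_nonneg hy0 3]
  have hy4 : y^2 ≤ 9 * h^2 / r^2 := by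
    calc y^2 ≤ (3 * h / r)^2 := by gcongr
      _ = _ := by ring
  have e1 : h * (1/2 + 5*h)/r^2 = h * (1/2) * ((2*x+1)/r^2) - 1/2 * y + (11/2) * h^2/r^2 := by
    rw [hy]; field_simp; ring
  rw [e1]
  have e2 : (11/2) * h^2/r^2 = (9 * h^2/r^2) * (11/18) := by ring
  have : h * (1/2 * Real.log (1 + (2 * 1 * x + 1^2)/r^2)) ≤ h * (1/2 * ((2 * x + 1)/r^2)) := by gcongr
  have h9 : 0 ≤ 9 * h^2/r^2 := by positivity
  rw [e2]
  nlinarith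

lemma gamma_ratio {a : ℂ} (ha : 1 ≤ a.re) {h : ℝ} (h0 : 0 < h) (h1 : h ≤ 1) :
    Real.log ‖Complex.Gamma (a + h)‖ - Real.log ‖Complex.Gamma a‖ ≤
      h * (Real.log ‖a‖ + 5/3 * (1/2 + 5 * h)) := by
  have hne : ∀ b : ℂ, 1 ≤ b.re → ∀ j : ℕ, b + j ≠ 0 := by
    intro b hb j h
    have := congrArg Complex.re h
    simp at this; linarith [(Nat.cast_nonneg j : (0:ℝ) ≤ j)]
  have hlog : ∀ b : ℂ, 1 ≤ b.re → ∀ n : ℕ, 0 < n → Real.log ‖Complex.GammaSeq b n‖ =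
      b.re * Real.log n + Real.log (n.factorial) - ∑ j ∈ Finset.range (n+1), Real.log ‖b + j‖ := by
    intro b hb n hn
    unfold Complex.GammaSeq
    rw [norm_div, norm_mul, norm_prod, Complex.norm_natCast_cpow_of_pos hn, Complex.norm_natCast,
      Real.log_div, Real.log_mul, Real.log_rpow (by exact_mod_cast hn), Real.log_prod]
    · intro j _; exact norm_ne_zero_iff.mpr (hne b hb j)
    · positivity
    · exact_mod_cast n.factorial_ne_zero
    · have := n.factorial_pos
      positivity
    · exact Finset.prod_ne_zero_iff.mpr fun j _ => norm_ne_zero_iff.mpr (hne b hb j)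
  have hah : 1 ≤ (a + h).re := by simp; linarith
  have ht : ∀ b : ℂ, 1 ≤ b.re → Tendsto (fun n => Real.log ‖Complex.GammaSeq b n‖) atTop
      (𝓝 (Real.log ‖Complex.Gamma b‖)) := by
    intro b hb
    apply Tendsto.log _ (norm_ne_zero_iff.mpr (Complex.Gamma_ne_zero_of_re_pos (by linarith)))
    exact (Complex.GammaSeq_tendsto_Gamma b).norm
  refine le_of_tendsto ((ht _ hah).sub (ht _ ha)) ?_
  filter_upwards [eventually_gt_atTop 0] with n hn
  rw [hlog _ hah n hn, hlog _ ha n hn]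
  have hsum : ∑ j ∈ Finset.range (n+1), h * (Real.log ‖a + (j+1:ℕ)‖ - Real.log ‖a + j‖) ≤
      ∑ j ∈ Finset.range (n+1), ((Real.log ‖a + h + j‖ - Real.log ‖a + j‖) + h * (1/2 + 5 * h) * (1/((j:ℝ)+1)^2)) := by
    refine Finset.sum_le_sum fun j _ => ?_
    have hre : 1 ≤ (a + j).re := by simp; linarith [(Nat.cast_nonneg j : (0:ℝ) ≤ j)]
    have := log_term hre h0 h1
    rw [show a + ((j+1:ℕ):ℂ) = a + j + 1 by push_cast; ring, show a + h + j = a + j + h by ring]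
    refine this.trans ?_
    gcongr
    rw [div_eq_mul_one_div]
    gcongr
    refine le_trans ?_ (Complex.re_le_norm _)
    simp; linarith
  rw [← Finset.mul_sum, Finset.sum_range_sub (fun j : ℕ => Real.log ‖a + (j:ℂ)‖), Finset.sum_add_distrib,
    Finset.sum_sub_distrib, ← Finset.mul_sum] at hsum
  have hz : ∑ j ∈ Finset.range (n+1), 1/((j:ℝ)+1)^2 ≤ 5/3 := by
    have h2 : HasSum (fun n : ℕ => 1 / ((n:ℝ)+1)^2) (π^2/6) := by
      have := hasSum_zeta_two
      rw [← hasSum_nat_add_iff' 1] at this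
      simpa using this
    have h6 : π^2 ≤ 10 := by nlinarith [Real.pi_lt_d2, Real.pi_pos]
    have := sum_le_hasSum (Finset.range (n+1)) (fun j _ => by positivity) h2
    linarith
  have hn1 : Real.log n ≤ Real.log ‖a + (n+1:ℕ)‖ := by
    apply Real.log_le_log (by exact_mod_cast hn)
    refine le_trans ?_ (Complex.re_le_norm _)
    simp; linarith
  have h5 : h * (1/2 + 5 * h) * ∑ j ∈ Finset.range (n+1), 1/((j:ℝ)+1)^2 ≤ h * (1/2 + 5 * h) * (5/3) := by
    gcongr
  have h6 : h * Real.log n ≤ h * Real.log ‖a + (n+1:ℕ)‖ := by gcongr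
  have h7 : (a + h).re = a.re + h := by simp
  rw [h7]
  simp only [Nat.cast_zero, add_zero] at hsum
  linarith
end HB

namespace HB

open scoped Real
open Filter Topology MeasureTheory Set
open ArithmeticFunction (vonMangoldt)

/-- The xi function, `π^(-s/2) Γ(s/2+1) (s-1) ζ(s)`. -/
noncomputable def X (s : ℂ) : ℂ :=
  Complex.exp (-(s/2) * (Real.log π : ℝ)) * Complex.Gamma (s/2 + 1) * riemannZeta₁ s

lemma G_conj (s : ℂ) : riemannZeta₁ (starRingEnd ℂ s) = starRingEnd ℂ (riemannZeta₁ s) := by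
  by_cases h : s = 1
  · subst h; simp
  · have h' : starRingEnd ℂ s ≠ 1 := by
      intro h2; apply h
      have := congrArg (starRingEnd ℂ) h2
      simpa using this
    rw [G_eq _ h, G_eq _ h', riemannZeta_conj]; simp

lemma X_conj (s : ℂ) : X (starRingEnd ℂ s) = starRingEnd ℂ (X s) := by
  unfold X
  have h2 : starRingEnd ℂ (2:ℂ) = 2 := Complex.conj_ofNat 2
  rw [map_mul, map_mul, ← Complex.exp_conj, ← Complex.Gamma_conj, G_conj]
  simp [h2]

lemma X_eq {s : ℂ} (h0 : 0 < s.re) (h1 : s ≠ 1) : X s = 1/2 * s * (s - 1) * completedRiemannZeta s := by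
  have hs0 : s ≠ 0 := by rintro rfl; simp at h0
  have hg := Complex.Gammaℝ_ne_zero_of_re_pos h0
  have e : completedRiemannZeta s = Complex.Gammaℝ s * riemannZeta s := by
    rw [riemannZeta_def_of_ne_zero hs0]; field_simp
  rw [e, X, G_eq s h1, Complex.Gammaℝ_def, Complex.Gamma_add_one _ (by simpa using hs0),
    Complex.cpow_def_of_ne_zero (by exact_mod_cast Real.pi_ne_zero), ← Complex.ofReal_log Real.pi_pos.le]
  rw [show (Real.log π : ℂ) * (-s/2) = -(s/2) * (Real.log π : ℝ) by ring]
  ring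

lemma X_fe {s : ℂ} (h0 : 0 < s.re) (h1 : s.re < 1) : X (1 - s) = X s := by
  rw [X_eq h0 (by rintro rfl; simp at h1), X_eq (s := 1 - s) (by simpa using h1) (by
    intro h
    have := congrArg Complex.re h
    simp at this; linarith), completedRiemannZeta_one_sub]
  ring

lemma X_diff {s : ℂ} (h0 : 0 < s.re) : DifferentiableAt ℂ X s := by
  unfold X
  have hG : DifferentiableAt ℂ (fun s : ℂ => Complex.Gamma (s/2+1)) s := by
    apply DifferentiableAt.comp (g := Complex.Gamma) (f := fun s : ℂ => s/2+1)
    · apply Complex.differentiableAt_Gamma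
      intro m h
      have := congrArg Complex.re h
      simp at this; linarith [(Nat.cast_nonneg m : (0:ℝ) ≤ m)]
    · fun_prop
  have h2 := differentiable_riemannZeta₁ s
  fun_prop

lemma X_ne_zero (hG : ∀ s ∈ HP, riemannZeta₁ s ≠ 0) {s : ℂ} (hs : s ∈ HP) : X s ≠ 0 := by
  have hs' : 1/2 < s.re := hs
  refine mul_ne_zero (mul_ne_zero (Complex.exp_ne_zero _) (Complex.Gamma_ne_zero_of_re_pos ?_)) (hG s hs)
  simp; linarith

lemma X_boundary {h : ℝ} (h0 : 0 < h) (h1 : h ≤ 1/4) (t : ℝ) :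
    ‖X (t * Complex.I + 1/2 - h)‖ = ‖X (t * Complex.I + 1/2 + h)‖ := by
  have e : (t * Complex.I + 1/2 - h : ℂ) = starRingEnd ℂ (1 - (t * Complex.I + 1/2 + h)) := by
    have h2 : starRingEnd ℂ (2:ℂ) = 2 := Complex.conj_ofNat 2
    simp [h2]; ring
  rw [e, X_conj, X_fe, RCLike.norm_conj]
  · simp; linarith
  · simp; linarith

lemma zeta_upper {s : ℂ} (hs : 2 ≤ s.re) (him : s.im = 0) : ‖riemannZeta s‖ ≤ 3 := by
  have hs' : s = (s.re : ℂ) := by apply Complex.ext <;> simp [him]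
  rw [zeta_fr (by linarith)]
  have h1 := fr_mellin_norm (s := s) (by linarith)
  have hn : ‖s‖ = s.re := by
    rw [hs', Complex.norm_real, Complex.ofReal_re, Real.norm_of_nonneg (by linarith)]
  have h2 : s.re - 1 ≤ ‖s - 1‖ := by simpa using Complex.re_le_norm (s-1)
  calc _ ≤ ‖s/(s-1)‖ + ‖s * mellin fr (-s)‖ := norm_sub_le _ _
    _ ≤ s.re / (s.re - 1) + s.re * (1/s.re) := by
        rw [norm_div, norm_mul, hn]
        have : 0 < s.re - 1 := by linarith
        gcongr
    _ ≤ 2 + 1 := by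
        have h3 : s.re * (1/s.re) = 1 := by field_simp
        have h4 : s.re / (s.re - 1) ≤ 2 := by rw [div_le_iff₀ (by linarith)]; linarith
        linarith
    _ = 3 := by norm_num

lemma X_norm (s : ℂ) : ‖X s‖ = Real.exp (-(s.re/2) * Real.log π) * ‖Complex.Gamma (s/2+1)‖ * ‖riemannZeta₁ s‖ := by
  unfold X
  rw [norm_mul, norm_mul, Complex.norm_exp]
  congr 3
  simp

lemma X_ratio (hG : ∀ s ∈ HP, riemannZeta₁ s ≠ 0) {h : ℝ} (h0 : 0 < h) (h1 : h ≤ 1/4) :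
    ∃ C > 0, ∀ s : ℂ, 1/2 ≤ s.re →
      ‖X (s - h) / X (s + h)‖ ≤ C * (‖riemannZeta₁ (s - h)‖ * ‖riemannZeta₁ (s + h)‖⁻¹) := by
  have hg : 0 < ‖Complex.Gamma h‖ :=
    norm_pos_iff.mpr (Complex.Gamma_ne_zero_of_re_pos (by simpa using h0))
  refine ⟨Real.exp (h * Real.log π) * (1/h/‖Complex.Gamma h‖), by positivity, ?_⟩
  intro s hs
  have hne : X (s + h) ≠ 0 := X_ne_zero hG (by show 1/2 < (s+h).re; simp; linarith)
  have hGn : riemannZeta₁ (s + h) ≠ 0 := hG _ (by show 1/2 < (s+h).re; simp; linarith)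
  have h3 := gamma_ratio_bdd (a := (s - h)/2 + 1) (by simp; linarith) h0
  rw [show (s-h)/2+1+h = (s+h)/2+1 by ring] at h3
  rw [norm_div, div_le_iff₀ (norm_pos_iff.mpr hne), X_norm, X_norm]
  have e : Real.exp (-((s-h).re/2) * Real.log π) = Real.exp (h * Real.log π) * Real.exp (-((s+h).re/2) * Real.log π) := by
    rw [← Real.exp_add]; congr 1; simp; ring
  have hGn' : 0 < ‖riemannZeta₁ (s+h)‖ := norm_pos_iff.mpr hGn
  rw [e]
  calc _ ≤ Real.exp (h * Real.log π) * Real.exp (-((s+h).re/2) * Real.log π) *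
        ((1 / h / ‖Complex.Gamma h‖) * ‖Complex.Gamma ((s+h)/2+1)‖) * ‖riemannZeta₁ (s-h)‖ := by gcongr
    _ = _ := by field_simp

lemma X_le (hG : ∀ s ∈ HP, riemannZeta₁ s ≠ 0) {h : ℝ} (h0 : 0 < h) (h1 : h ≤ 1/4) {s : ℂ} (hs : 1/2 ≤ s.re) :
    ‖X (s - h)‖ ≤ ‖X (s + h)‖ := by
  have hne : ∀ s : ℂ, 1/2 ≤ s.re → X (s + h) ≠ 0 := fun s hs =>
    X_ne_zero hG (by show 1/2 < (s+h).re; simp; linarith)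
  obtain ⟨C, hC, hCb⟩ := X_ratio hG h0 h1
  set f : ℂ → ℂ := fun z => X (z + 1/2 - h) / X (z + 1/2 + h) with hf
  have hfd : ∀ z : ℂ, 0 ≤ z.re → DifferentiableAt ℂ f z := by
    intro z hz
    have d1 : DifferentiableAt ℂ (fun z : ℂ => X (z + 1/2 - h)) z :=
      DifferentiableAt.comp (g := X) (f := fun z : ℂ => z + 1/2 - h) z (X_diff (by simp; linarith)) (by fun_prop)
    have d2 : DifferentiableAt ℂ (fun z : ℂ => X (z + 1/2 + h)) z :=
      DifferentiableAt.comp (g := X) (f := fun z : ℂ => z + 1/2 + h) z (X_diff (by simp; linarith)) (by fun_prop)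
    exact d1.div d2 (hne (z + 1/2) (by simpa using hz))
  have hmain : ‖f (s - 1/2)‖ ≤ 1 := by
    apply PhragmenLindelof.right_half_plane_of_bounded_on_real
    · apply DifferentiableOn.diffContOnCl
      intro z hz
      rw [Complex.closure_setOfPred_lt_re] at hz
      exact (hfd z hz).differentiableWithinAt
    · refine ⟨1, by norm_num, 2 + 48/h, ?_⟩
      apply Asymptotics.IsBigO.of_bound (C * (5 * Real.exp 4 * (4 * Real.exp (48/h * 6))))
      rw [eventually_inf_principal]
      filter_upwards with z hz
      have hz : 0 < z.re := hz
      have hz2 : 1/2 ≤ (z + 1/2).re := by simp; linarith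
      refine (hCb (z+1/2) hz2).trans ?_
      have b1 := G_bound (s := z + 1/2 - h) (by simp; linarith)
      have b2 := (G_log hG h0 (by linarith) (s := z + 1/2 + h) (by simp; linarith)).2
      have n1 : ‖z + 1/2 - h‖ ≤ ‖z‖ + 1 := by
        calc _ ≤ ‖z‖ + ‖(1/2:ℂ)‖ + ‖(h:ℂ)‖ := (norm_sub_le _ _).trans (by gcongr; exact norm_add_le _ _)
          _ ≤ _ := by rw [Complex.norm_real, Real.norm_of_nonneg h0.le]; norm_num; linarith
      have n2 : ‖z + 1/2 + h‖ ≤ ‖z‖ + 1 := by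
        calc _ ≤ ‖z‖ + ‖(1/2:ℂ)‖ + ‖(h:ℂ)‖ := (norm_add_le _ _).trans (by gcongr; exact norm_add_le _ _)
          _ ≤ _ := by rw [Complex.norm_real, Real.norm_of_nonneg h0.le]; norm_num; linarith
      have n3 : √(4 + ‖z + 1/2 + h‖) ≤ 6 + ‖z‖ := by
        rw [Real.sqrt_le_left (by positivity)]
        nlinarith [norm_nonneg z]
      have n4 : (1 + ‖z + 1/2 - h‖)^2 ≤ Real.exp 4 * Real.exp (2 * ‖z‖) := by
        rw [← Real.exp_add]
        calc (1 + ‖z + 1/2 - h‖)^2 ≤ (Real.exp (2 + ‖z‖))^2 := by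
              gcongr
              linarith [Real.add_one_le_exp (2 + ‖z‖)]
          _ = _ := by rw [← Real.exp_nat_mul]; congr 1; push_cast; ring
      rw [Real.rpow_one, Real.norm_of_nonneg (Real.exp_pos _).le]
      calc C * (‖riemannZeta₁ (z + 1/2 - h)‖ * ‖riemannZeta₁ (z + 1/2 + h)‖⁻¹)
          ≤ C * ((5 * (Real.exp 4 * Real.exp (2 * ‖z‖))) * (4 * Real.exp (48/h * (6 + ‖z‖)))) := by
            gcongr
            · exact b1.trans (by gcongr)
            · exact b2.trans (by gcongr)
        _ = _ := by
            rw [mul_add (48/h), add_mul 2, Real.exp_add, Real.exp_add]; ring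
    · refine ⟨C * 12, ?_⟩
      rw [eventually_map]
      filter_upwards [eventually_ge_atTop 2] with x hx
      refine (hCb (x+1/2) (by simp; linarith)).trans ?_
      gcongr
      have z1 := zeta_upper (s := (x:ℂ) + 1/2 - h) (by simp; linarith) (by simp)
      have z2 := zeta_lower (s := (x:ℂ) + 1/2 + h) (by simp; linarith)
      rw [G_eq, G_eq, norm_mul, norm_mul]
      · have a1 : ‖(x:ℂ) + 1/2 - h - 1‖ = x - 1/2 - h := by
          have : (x:ℂ) + 1/2 - h - 1 = ((x - 1/2 - h : ℝ) : ℂ) := by push_cast; ring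
          rw [this, Complex.norm_real, Real.norm_of_nonneg (by linarith)]
        have a2 : ‖(x:ℂ) + 1/2 + h - 1‖ = x - 1/2 + h := by
          have : (x:ℂ) + 1/2 + h - 1 = ((x - 1/2 + h : ℝ) : ℂ) := by push_cast; ring
          rw [this, Complex.norm_real, Real.norm_of_nonneg (by linarith)]
        rw [a1, a2, ← div_eq_mul_inv, div_le_iff₀ (by apply mul_pos <;> linarith)]
        nlinarith [norm_nonneg (riemannZeta ((x:ℂ) + 1/2 - h))]
      · intro h; have := congrArg Complex.re h; simp at this; linarith
      · intro h; have := congrArg Complex.re h; simp at this; linarith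
    · intro x
      simp only [hf]
      rw [norm_div, X_boundary h0 h1, div_self]
      exact norm_ne_zero_iff.mpr (hne _ (by simp))
    · simpa using hs
  simp only [hf, sub_add_cancel] at hmain
  rwa [norm_div, div_le_one (norm_pos_iff.mpr (hne s hs))] at hmain

lemma log_G_ineq (hG : ∀ s ∈ HP, riemannZeta₁ s ≠ 0) {h : ℝ} (h0 : 0 < h) (h1 : h ≤ 1/4) {s : ℂ} (hs : 1/2 + h < s.re) :
    h * (Real.log π - Real.log ‖(s - h)/2 + 1‖ - 5/3 * (1/2 + 5*h)) ≤
      Real.log ‖riemannZeta₁ (s + h)‖ - Real.log ‖riemannZeta₁ (s - h)‖ := by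
  have hX := X_le hG h0 h1 (s := s) (by linarith)
  have m1 : s - h ∈ HP := by show 1/2 < (s-h).re; simp; linarith
  have m2 : s + h ∈ HP := by show 1/2 < (s+h).re; simp; linarith
  have hlogX : ∀ w ∈ HP, Real.log ‖X w‖ = -(w.re/2) * Real.log π + Real.log ‖Complex.Gamma (w/2+1)‖ +
      Real.log ‖riemannZeta₁ w‖ := by
    intro w hw
    have hw' : 1/2 < w.re := hw
    have g1 : ‖Complex.Gamma (w/2+1)‖ ≠ 0 :=
      norm_ne_zero_iff.mpr (Complex.Gamma_ne_zero_of_re_pos (by simp; linarith))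
    rw [X_norm, Real.log_mul (by positivity) (norm_ne_zero_iff.mpr (hG w hw)), Real.log_mul (by positivity) g1, Real.log_exp]
  have hl := Real.log_le_log (norm_pos_iff.mpr (X_ne_zero hG m1)) hX
  rw [hlogX _ m1, hlogX _ m2] at hl
  have hgr := gamma_ratio (a := (s - h)/2 + 1) (by simp; linarith) h0 (by linarith)
  rw [show (s-h)/2+1+h = (s+h)/2+1 by ring] at hgr
  simp only [Complex.sub_re, Complex.add_re, Complex.ofReal_re] at hl
  linarith

lemma re_D_lower (hG : ∀ s ∈ HP, riemannZeta₁ s ≠ 0) {s : ℂ} (hs : s ∈ HP) :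
    -(1/2 * Real.log ‖s/2 + 1‖) ≤ (logDeriv riemannZeta₁ s).re := by
  have hs' : 1/2 < s.re := hs
  have hd : HasDerivAt (fun h : ℝ => Real.log ‖riemannZeta₁ (s + h)‖) (logDeriv riemannZeta₁ s).re 0 := by
    have d1 : HasDerivAt (fun h : ℝ => riemannZeta₁ (s + h)) (deriv riemannZeta₁ s) 0 := by
      have := (differentiable_riemannZeta₁ (s + (0:ℝ))).hasDerivAt
      have h2 : HasDerivAt (fun h : ℝ => s + (h:ℂ)) 1 0 := by
        simpa using (Complex.ofRealCLM.hasDerivAt (x := (0:ℝ))).const_add s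
      have h3 := HasDerivAt.comp_of_eq (x := (0:ℝ)) (h₂ := riemannZeta₁) (h := fun h : ℝ => s + (h:ℂ)) this h2 rfl
      have e0 : deriv riemannZeta₁ s = deriv riemannZeta₁ (s + (0:ℝ)) * 1 := by simp
      rw [e0]
      exact h3
    have hne : riemannZeta₁ s ≠ 0 := hG s hs
    have d2 := d1.norm_sq.log (by simpa using hne)
    have d3 := d2.const_mul (1/2)
    have e : (fun h : ℝ => Real.log ‖riemannZeta₁ (s + h)‖) = fun h : ℝ => 1/2 * Real.log (‖riemannZeta₁ (s + h)‖^2) := by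
      ext h; rw [Real.log_pow]; push_cast; ring
    rw [e]
    have e2 : (logDeriv riemannZeta₁ s).re = 1/2 * (2 * inner ℝ (riemannZeta₁ (s + (0:ℝ))) (deriv riemannZeta₁ s)
        / ‖riemannZeta₁ (s + (0:ℝ))‖^2) := by
      simp only [Complex.ofReal_zero, add_zero, Complex.inner]
      rw [logDeriv_apply, Complex.div_re, Complex.sq_norm]
      simp
      ring
    rw [e2]
    exact d3
  set φ : ℝ → ℝ := fun h : ℝ => Real.log ‖riemannZeta₁ (s + h)‖ with hφ
  have hd' : HasDerivAt (fun h : ℝ => φ (-h)) (-(logDeriv riemannZeta₁ s).re) 0 := by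
    have h1 : HasDerivAt (fun h : ℝ => -h) (-1) (0:ℝ) := hasDerivAt_neg 0
    have h2 := HasDerivAt.comp_of_eq (x := (0:ℝ)) (h₂ := φ) (h := fun h : ℝ => -h) hd h1 (by simp)
    have e0 : -(logDeriv riemannZeta₁ s).re = (logDeriv riemannZeta₁ s).re * (-1) := by ring
    rw [e0]; exact h2
  have hF := hd.sub hd'
  have hT := hF.tendsto_slope_zero_right
  have hc : Tendsto (fun h : ℝ => Real.log π - Real.log ‖(s - h)/2 + 1‖ - 5/3*(1/2 + 5*h)) (𝓝[>] 0)
      (𝓝 (Real.log π - Real.log ‖(s - (0:ℝ))/2 + 1‖ - 5/3*(1/2 + 5*0))) := by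
    have hne : ‖(s - (0:ℝ))/2 + 1‖ ≠ 0 := by
      rw [norm_ne_zero_iff]
      intro h
      have := congrArg Complex.re h
      simp at this
      linarith
    have : ContinuousAt (fun h : ℝ => Real.log π - Real.log ‖(s - h)/2 + 1‖ - 5/3*(1/2 + 5*h)) 0 := by
      refine ContinuousAt.sub (ContinuousAt.sub continuousAt_const (ContinuousAt.log ?_ hne)) ?_ <;> fun_prop
    exact this.tendsto.mono_left nhdsWithin_le_nhds
  have hle := le_of_tendsto_of_tendsto hc hT ?_
  · have hpi : 1 ≤ Real.log π := by
      rw [Real.le_log_iff_exp_le Real.pi_pos]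
      linarith [Real.exp_one_lt_d9, Real.pi_gt_d2]
    simp only [Complex.ofReal_zero, sub_zero] at hle
    linarith
  · have hm : ∀ᶠ h : ℝ in 𝓝[>] 0, h ∈ Ioo (0:ℝ) (min (1/4) (s.re - 1/2)) :=
      Ioo_mem_nhdsGT (lt_min (by norm_num) (by linarith))
    filter_upwards [hm] with h hh
    obtain ⟨h0, h1⟩ := hh
    have h2 := log_G_ineq hG h0 ((h1.trans_le (min_le_left _ _)).le) (s := s) (by
      have := h1.trans_le (min_le_right _ _); linarith)
    simp only [Pi.sub_apply, smul_eq_mul, zero_add, neg_zero, sub_self, sub_zero, hφ]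
    rw [inv_mul_eq_div, le_div_iff₀ h0]
    push_cast
    rw [← sub_eq_add_neg]
    linarith
end HB

namespace HB

open scoped Real
open Filter Topology MeasureTheory Set
open ArithmeticFunction (vonMangoldt)

/-- The point `σ + i t`. -/
noncomputable def vl (σ t : ℝ) : ℂ := (σ : ℂ) + (t : ℂ) * Complex.I

@[simp] lemma vl_re (σ t : ℝ) : (vl σ t).re = σ := by simp [vl]
@[simp] lemma vl_im (σ t : ℝ) : (vl σ t).im = t := by simp [vl]
lemma vl_cont (σ : ℝ) : Continuous (fun t => vl σ t) := by unfold vl; fun_prop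

lemma vl_norm {σ : ℝ} (hσ : 1/2 ≤ σ) (t : ℝ) : 1 + ‖t‖ ≤ 3 * ‖vl σ t‖ := by
  have h1 := Complex.abs_re_le_norm (vl σ t)
  have h2 := Complex.abs_im_le_norm (vl σ t)
  rw [vl_re] at h1
  rw [vl_im] at h2
  rw [Real.norm_eq_abs]
  have := le_abs_self σ
  linarith

lemma vl_rpow {σ : ℝ} (hσ : 1/2 ≤ σ) (t : ℝ) :
    ‖vl σ t‖ ^ (-(3/2) : ℝ) ≤ 3 ^ (3/2 : ℝ) * (1 + ‖t‖) ^ (-(3/2) : ℝ) := by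
  have h := vl_norm hσ t
  have h0 : 0 < 1 + ‖t‖ := by positivity
  have h1 : (1 + ‖t‖)/3 ≤ ‖vl σ t‖ := by linarith
  calc ‖vl σ t‖ ^ (-(3/2) : ℝ) ≤ ((1 + ‖t‖)/3) ^ (-(3/2) : ℝ) :=
        Real.rpow_le_rpow_of_nonpos (by positivity) h1 (by norm_num)
    _ = _ := by
        rw [Real.div_rpow h0.le (by norm_num), Real.rpow_neg (by norm_num : (0:ℝ) ≤ 3), div_inv_eq_mul, mul_comm]

lemma dom_int (C : ℝ) : Integrable (fun t : ℝ => C * (3 ^ (3/2 : ℝ) * (1 + ‖t‖) ^ (-(3/2) : ℝ))) := by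
  have : Integrable (fun t : ℝ => (1 + ‖t‖) ^ (-(3/2) : ℝ)) := integrable_one_add_norm (by simp; norm_num)
  exact (this.const_mul _).const_mul _

lemma vl_bound {f : ℂ → ℂ} {σ C : ℝ} (hσ : 1/2 < σ)
    (hC : ∀ s : ℂ, s.re = σ → ‖f s‖ ≤ C * ‖s‖ ^ (-(3/2) : ℝ)) (t : ℝ) :
    ‖f (vl σ t)‖ ≤ C * (3 ^ (3/2 : ℝ) * (1 + ‖t‖) ^ (-(3/2) : ℝ)) := by
  have h1 := hC (vl σ t) (vl_re _ _)
  have hpos : 0 < ‖vl σ t‖ := by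
    have := vl_norm hσ.le t
    have : 0 ≤ ‖t‖ := norm_nonneg _
    linarith
  have hC0 : 0 ≤ C := by
    have h2 := (norm_nonneg _).trans h1
    have h3 : 0 < ‖vl σ t‖ ^ (-(3/2) : ℝ) := Real.rpow_pos_of_pos hpos _
    by_contra hh
    push Not at hh
    nlinarith
  exact h1.trans (mul_le_mul_of_nonneg_left (vl_rpow hσ.le t) hC0)

lemma vl_integrable {f : ℂ → ℂ} {σ C : ℝ} (hσ : 1/2 < σ) (hf : Continuous (fun t => f (vl σ t)))
    (hC : ∀ s : ℂ, s.re = σ → ‖f s‖ ≤ C * ‖s‖ ^ (-(3/2) : ℝ)) :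
    Integrable (fun t => f (vl σ t)) :=
  (dom_int C).mono' hf.aestronglyMeasurable (Eventually.of_forall fun t => vl_bound hσ hC t)

lemma strip_cont {f : ℂ → ℂ} {σ₁ σ₂ σ : ℝ} (h1 : σ₁ ≤ σ) (h2 : σ ≤ σ₂)
    (hf : DifferentiableOn ℂ f {s | σ₁ ≤ s.re ∧ s.re ≤ σ₂}) : Continuous (fun t => f (vl σ t)) :=
  hf.continuousOn.comp_continuous (vl_cont σ) (fun t => by simp [h1, h2])

lemma shift {f : ℂ → ℂ} {σ₁ σ₂ C : ℝ} (h1 : 1/2 < σ₁) (h12 : σ₁ ≤ σ₂)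
    (hf : DifferentiableOn ℂ f {s | σ₁ ≤ s.re ∧ s.re ≤ σ₂})
    (hC : ∀ s : ℂ, σ₁ ≤ s.re → s.re ≤ σ₂ → ‖f s‖ ≤ C * ‖s‖ ^ (-(3/2) : ℝ)) :
    ∫ t, f (vl σ₁ t) = ∫ t, f (vl σ₂ t) := by
  have i1 : Integrable (fun t => f (vl σ₁ t)) :=
    vl_integrable h1 (strip_cont le_rfl h12 hf) (fun s hs => hC s hs.ge (hs.le.trans h12))
  have i2 : Integrable (fun t => f (vl σ₂ t)) :=
    vl_integrable (h1.trans_le h12) (strip_cont h12 le_rfl hf) (fun s hs => hC s (h12.trans hs.ge) hs.le)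
  have hrect : ∀ T : ℝ, (∫ x in σ₁..σ₂, f (vl x (-T))) - (∫ x in σ₁..σ₂, f (vl x T))
      + Complex.I * (∫ y in (-T)..T, f (vl σ₂ y)) - Complex.I * (∫ y in (-T)..T, f (vl σ₁ y)) = 0 := by
    intro T
    have := Complex.integral_boundary_rect_eq_zero_of_differentiableOn f (vl σ₁ (-T)) (vl σ₂ T) (by
      apply hf.mono
      intro s hs
      rw [Complex.mem_reProdIm] at hs
      simp only [vl_re] at hs
      rw [uIcc_of_le h12] at hs
      exact hs.1)
    simpa [vl] using this
  have hz : ∀ T : ℝ, 0 < T → ∀ x ∈ Icc σ₁ σ₂, ∀ u : ℝ, |u| = T → ‖f (vl x u)‖ ≤ C * T ^ (-(3/2) : ℝ) := by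
    intro T hT x hx u hu
    have h := hC (vl x u) (by simpa using hx.1) (by simpa using hx.2)
    have hn : T ≤ ‖vl x u‖ := by
      have := Complex.abs_im_le_norm (vl x u)
      rw [vl_im, hu] at this; exact this
    have hC0 : 0 ≤ C := by
      have h2 := (norm_nonneg _).trans h
      have h3 : 0 < ‖vl x u‖ ^ (-(3/2) : ℝ) := Real.rpow_pos_of_pos (hT.trans_le hn) _
      by_contra hh
      push Not at hh
      nlinarith
    exact h.trans (mul_le_mul_of_nonneg_left (Real.rpow_le_rpow_of_nonpos hT hn (by norm_num)) hC0)
  have hlim0 : Tendsto (fun T : ℝ => C * T ^ (-(3/2) : ℝ) * |σ₂ - σ₁|) atTop (𝓝 0) := by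
    have := ((tendsto_rpow_neg_atTop (by norm_num : (0:ℝ) < 3/2)).const_mul C).mul_const |σ₂ - σ₁|
    simpa using this
  have hz1 : Tendsto (fun T : ℝ => ∫ x in σ₁..σ₂, f (vl x (-T))) atTop (𝓝 0) := by
    apply squeeze_zero_norm' _ hlim0
    filter_upwards [eventually_gt_atTop 0] with T hT
    apply intervalIntegral.norm_integral_le_of_norm_le_const
    intro x hx
    rw [uIoc_of_le h12] at hx
    exact hz T hT x ⟨hx.1.le, hx.2⟩ _ (by rw [abs_neg, abs_of_pos hT])
  have hz2 : Tendsto (fun T : ℝ => ∫ x in σ₁..σ₂, f (vl x T)) atTop (𝓝 0) := by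
    apply squeeze_zero_norm' _ hlim0
    filter_upwards [eventually_gt_atTop 0] with T hT
    apply intervalIntegral.norm_integral_le_of_norm_le_const
    intro x hx
    rw [uIoc_of_le h12] at hx
    exact hz T hT x ⟨hx.1.le, hx.2⟩ _ (by rw [abs_of_pos hT])
  have t1 := intervalIntegral_tendsto_integral i1 tendsto_neg_atTop_atBot tendsto_id
  have t2 := intervalIntegral_tendsto_integral i2 tendsto_neg_atTop_atBot tendsto_id
  have t3 := ((hz1.sub hz2).add (t2.const_mul Complex.I)).sub (t1.const_mul Complex.I)
  have t4 : Tendsto (fun _ : ℝ => (0:ℂ)) atTop (𝓝 (0 - 0 + Complex.I * (∫ t, f (vl σ₂ t)) - Complex.I * (∫ t, f (vl σ₁ t)))) := by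
    refine t3.congr (fun T => ?_)
    exact hrect T
  have h5 := tendsto_nhds_unique t4 tendsto_const_nhds
  have h6 : Complex.I * ((∫ t, f (vl σ₂ t)) - ∫ t, f (vl σ₁ t)) = 0 := by
    rw [← h5]; ring
  rcases mul_eq_zero.mp h6 with h | h
  · exact absurd h Complex.I_ne_zero
  · exact (sub_eq_zero.mp h).symm

lemma halfplane_zero {f : ℂ → ℂ} {σ C : ℝ} (h1 : 1/2 < σ)
    (hf : DifferentiableOn ℂ f HP)
    (hC : ∀ s : ℂ, σ ≤ s.re → ‖f s‖ ≤ C * ‖s‖ ^ (-(3/2) : ℝ)) :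
    ∫ t, f (vl σ t) = 0 := by
  have hs : ∀ τ, σ ≤ τ → ∫ t, f (vl σ t) = ∫ t, f (vl τ t) := fun τ hτ =>
    shift h1 hτ (hf.mono (fun s hs => h1.trans_le hs.1)) (fun s h _ => hC s h)
  have hlim : Tendsto (fun τ : ℝ => ∫ t, f (vl τ t)) atTop (𝓝 (∫ _t : ℝ, (0:ℂ))) := by
    apply tendsto_integral_filter_of_dominated_convergence _ _ _ (dom_int C)
    · apply Eventually.of_forall
      intro t
      have hl : Tendsto (fun T : ℝ => C * T ^ (-(3/2) : ℝ)) atTop (𝓝 0) := by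
        simpa using (tendsto_rpow_neg_atTop (by norm_num : (0:ℝ) < 3/2)).const_mul C
      apply squeeze_zero_norm' _ hl
      filter_upwards [eventually_ge_atTop σ] with τ hτ
      have h := hC (vl τ t) (by simpa using hτ)
      have hτ0 : 0 < τ := by linarith
      have hn : τ ≤ ‖vl τ t‖ := by
        have := Complex.re_le_norm (vl τ t)
        rwa [vl_re] at this
      have hC0 : 0 ≤ C := by
        have h2 := (norm_nonneg _).trans h
        have h3 : 0 < ‖vl τ t‖ ^ (-(3/2) : ℝ) := Real.rpow_pos_of_pos (hτ0.trans_le hn) _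
        by_contra hh
        push Not at hh
        nlinarith
      exact h.trans (mul_le_mul_of_nonneg_left (Real.rpow_le_rpow_of_nonpos hτ0 hn (by norm_num)) hC0)
    · filter_upwards [eventually_ge_atTop σ] with τ hτ
      exact (hf.continuousOn.comp_continuous (vl_cont τ) (fun t => by
        change 1/2 < (vl τ t).re; rw [vl_re]; linarith)).aestronglyMeasurable
    · filter_upwards [eventually_ge_atTop σ] with τ hτ
      exact Eventually.of_forall (fun t => vl_bound (h1.trans_le hτ) (fun s h => hC s (hτ.trans h.ge)) t)
  rw [integral_zero] at hlim
  have : Tendsto (fun τ : ℝ => ∫ t, f (vl τ t)) atTop (𝓝 (∫ t, f (vl σ t))) := by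
    apply tendsto_const_nhds.congr'
    filter_upwards [eventually_ge_atTop σ] with τ hτ
    exact hs τ hτ
  exact tendsto_nhds_unique this hlim
end HB

namespace HB

open scoped Real
open Filter Topology MeasureTheory Set
open ArithmeticFunction (vonMangoldt)

/-- Growth of order at most `1/2` in each closed right half-plane inside `HP`. -/
def Gr (N : ℂ → ℂ) : Prop :=
  ∀ σ : ℝ, 1/2 < σ → ∃ C : ℝ, 0 ≤ C ∧ ∀ s : ℂ, σ ≤ s.re → ‖N s‖ ≤ C * ‖s‖ ^ (1/2 : ℝ)

lemma ker_bound {N w : ℂ} {b m A : ℝ} (hm : 0 < m) (hb : 0 ≤ b) (hw : 1/2 < w.re) (hwb : w.re ≤ b - m)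
    (hA : 0 ≤ A) (hN : ‖N‖ ≤ A * ‖w‖ ^ (1/2 : ℝ)) :
    ‖N / (w * (b - w))‖ ≤ A * (b/m + 1) * ‖w‖ ^ (-(3/2) : ℝ) := by
  have hw0 : 0 < ‖w‖ := by linarith [Complex.re_le_norm w]
  have h1 : m ≤ ‖(b:ℂ) - w‖ := by
    have := Complex.re_le_norm ((b:ℂ) - w)
    simp at this
    linarith
  have h2 : ‖w‖ ≤ b + ‖(b:ℂ) - w‖ := by
    have h3 : w = (b:ℂ) - (b - w) := by ring
    calc ‖w‖ = ‖(b:ℂ) - (b - w)‖ := by rw [← h3]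
      _ ≤ ‖(b:ℂ)‖ + ‖(b:ℂ) - w‖ := norm_sub_le _ _
      _ = _ := by rw [Complex.norm_real, Real.norm_eq_abs, abs_of_nonneg hb]
  have h3 : ‖w‖ ≤ (b/m + 1) * ‖(b:ℂ) - w‖ := by
    have : b ≤ b/m * ‖(b:ℂ) - w‖ := by
      calc b = b/m * m := by field_simp
        _ ≤ _ := mul_le_mul_of_nonneg_left h1 (by positivity)
    linarith
  have hbw : 0 < ‖(b:ℂ) - w‖ := hm.trans_le h1
  have e : ‖w‖ ^ (-(3/2) : ℝ) = ‖w‖ ^ (1/2 : ℝ) / (‖w‖ * ‖w‖) := by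
    rw [show (-(3/2) : ℝ) = 1/2 - 2 by norm_num, Real.rpow_sub hw0]
    norm_num [sq]
  rw [norm_div, norm_mul, e]
  rw [div_le_iff₀ (by positivity)]
  have hr : 0 ≤ ‖w‖ ^ (1/2 : ℝ) := by positivity
  calc ‖N‖ ≤ A * ‖w‖ ^ (1/2 : ℝ) := hN
    _ = A * ‖w‖ ^ (1/2 : ℝ) / ‖w‖ * ‖w‖ := by field_simp
    _ ≤ A * ‖w‖ ^ (1/2 : ℝ) / ‖w‖ * ((b/m + 1) * ‖(b:ℂ) - w‖) :=
        mul_le_mul_of_nonneg_left h3 (by positivity)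
    _ = _ := by field_simp

lemma half_le_rpow {w : ℂ} (hw : 1/2 < w.re) : (1:ℝ) ≤ 2 * ‖w‖ ^ (1/2 : ℝ) := by
  have h := Complex.re_le_norm w
  have h1 : (1/4 : ℝ) ^ (1/2 : ℝ) ≤ ‖w‖ ^ (1/2 : ℝ) := Real.rpow_le_rpow (by norm_num) (by linarith) (by norm_num)
  have h2 : (1/4 : ℝ) ^ (1/2 : ℝ) = 1/2 := by
    rw [show (1/4:ℝ) = (1/2)^(2:ℝ) by norm_num, ← Real.rpow_mul (by norm_num)]; norm_num
  rw [h2] at h1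
  linarith

lemma int_sq {a : ℝ} (ha : 0 < a) : ∫ t : ℝ, (1:ℂ) / (vl a t * ((2*a : ℝ) - vl a t)) = π / a := by
  have e : ∀ t : ℝ, (1:ℂ) / (vl a t * ((2*a : ℝ) - vl a t)) = (((a^2)⁻¹ * (1 + (a⁻¹ * t)^2)⁻¹ : ℝ) : ℂ) := by
    intro t
    have h : vl a t * ((2*a : ℝ) - vl a t) = ((a^2 * (1 + (a⁻¹ * t)^2) : ℝ) : ℂ) := by
      have : (a:ℂ) ≠ 0 := by exact_mod_cast ha.ne'
      unfold vl
      push_cast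
      field_simp
      ring_nf
      rw [Complex.I_sq]; ring
    rw [h, one_div, ← Complex.ofReal_inv, mul_inv]
  simp_rw [e]
  rw [integral_complex_ofReal, integral_const_mul,
    Measure.integral_comp_mul_left (fun u : ℝ => (1 + u^2)⁻¹) a⁻¹, integral_univ_inv_one_add_sq]
  rw [inv_inv, abs_of_pos ha, smul_eq_mul]
  push_cast
  have : (a:ℂ) ≠ 0 := by exact_mod_cast ha.ne'
  field_simp

lemma ker_diff {b : ℝ} {S : Set ℂ} (hS : ∀ w ∈ S, 1/2 < w.re ∧ w.re < b) :
    DifferentiableOn ℂ (fun w : ℂ => (1:ℂ) / (w * (b - w))) S := by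
  intro w hw
  have ⟨h1, h2⟩ := hS w hw
  refine (DifferentiableAt.div (by fun_prop) (by fun_prop) ?_).differentiableWithinAt
  apply mul_ne_zero
  · rintro rfl; simp at h1; linarith
  · intro h
    have := congrArg Complex.re h
    simp at this
    linarith

lemma int_kernel {b σ : ℝ} (hb : 1 < b) (hσ : 1/2 < σ) (hσb : σ < b) :
    ∫ t : ℝ, (1:ℂ) / (vl σ t * (b - vl σ t)) = 2 * π / b := by
  have key : ∀ σ₁ σ₂ : ℝ, 1/2 < σ₁ → σ₁ ≤ σ₂ → σ₂ < b →
      ∫ t : ℝ, (1:ℂ) / (vl σ₁ t * (b - vl σ₁ t)) = ∫ t : ℝ, (1:ℂ) / (vl σ₂ t * (b - vl σ₂ t)) := by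
    intro σ₁ σ₂ h1 h2 h3
    refine shift (f := fun w : ℂ => (1:ℂ) / (w * (b - w))) (C := 2 * (b/(b-σ₂) + 1)) h1 h2
      (ker_diff fun w hw => ⟨h1.trans_le hw.1, hw.2.trans_lt h3⟩) (fun s hs1 hs2 => ?_)
    refine ker_bound (by linarith) (by linarith) (by linarith) (by linarith) (by norm_num) ?_
    rw [norm_one]; exact half_le_rpow (by linarith)
  have h2 : ∫ t : ℝ, (1:ℂ) / (vl (b/2) t * (b - vl (b/2) t)) = 2 * π / b := by
    have := int_sq (a := b/2) (by linarith)
    rw [show 2 * (b/2) = b by ring] at this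
    rw [this]
    push_cast
    rw [div_div_eq_mul_div]; ring
  rcases le_total σ (b/2) with h | h
  · rw [key σ (b/2) hσ h (by linarith), h2]
  · rw [← key (b/2) σ (by linarith) h hσb, h2]

lemma N_int {N : ℂ → ℂ} (hN : DifferentiableOn ℂ N HP) (hgr : Gr N) {b σ : ℝ} (hσ : 1/2 < σ) (hσb : σ < b) :
    Integrable (fun t : ℝ => N (vl σ t) / (vl σ t * (b - vl σ t))) := by
  obtain ⟨A, hA, hA'⟩ := hgr σ hσ
  refine vl_integrable (f := fun w => N w / (w * (b - w))) (C := A * (b/(b-σ) + 1)) hσ ?_ ?_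
  · have hd := (hN.mono (t := HP) (s := {s | σ ≤ s.re ∧ s.re ≤ σ}) (fun s hs => hσ.trans_le hs.1)).mul
      (ker_diff (b := b) (S := {s | σ ≤ s.re ∧ s.re ≤ σ}) fun w hw => ⟨hσ.trans_le hw.1, hw.2.trans_lt hσb⟩)
    have := strip_cont le_rfl le_rfl hd
    simpa [div_eq_mul_inv] using this
  · intro s hs
    exact ker_bound (by linarith) (by linarith) (by linarith) (by linarith) hA (hA' s hs.ge)

lemma pois {N : ℂ → ℂ} (hN : DifferentiableOn ℂ N HP) (hgr : Gr N) {b σ : ℝ} (hb : 1 < b) (hσ : 1/2 < σ)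
    (hσb : σ < b) :
    ∫ t : ℝ, N (vl σ t) / (vl σ t * (b - vl σ t)) = 2 * π * N b / b := by
  have hbHP : (b:ℂ) ∈ HP := by change 1/2 < ((b:ℝ):ℂ).re; simp; linarith
  have hds : DifferentiableOn ℂ (dslope N b) HP :=
    (Complex.differentiableOn_dslope (HP_open.mem_nhds hbHP)).mpr hN
  set F : ℂ → ℂ := fun w => dslope N b w / w with hF
  have hFd : DifferentiableOn ℂ F HP := by
    refine hds.div differentiableOn_id (fun w hw => ?_)
    rintro rfl
    have : (1/2:ℝ) < (0:ℂ).re := hw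
    simp at this; linarith
  obtain ⟨A, hA, hA'⟩ := hgr σ hσ
  -- bound near `b`
  have hcpt : IsCompact (Metric.closedBall (b:ℂ) 1 ∩ {s | σ ≤ s.re}) :=
    (isCompact_closedBall _ _).inter_right (isClosed_le continuous_const Complex.continuous_re)
  obtain ⟨M, hM⟩ := hcpt.exists_bound_of_continuousOn (f := F)
    (hFd.continuousOn.mono (fun s hs => hσ.trans_le hs.2))
  have hFb : ∃ C : ℝ, ∀ s : ℂ, σ ≤ s.re → ‖F s‖ ≤ C * ‖s‖ ^ (-(3/2) : ℝ) := by
    refine ⟨max (|M| * (b+1) ^ (3/2 : ℝ)) ((A + 2 * ‖N b‖) * (b + 1)), fun s hs => ?_⟩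
    have hs0 : 0 < ‖s‖ := by linarith [Complex.re_le_norm s]
    have hr : 0 ≤ ‖s‖ ^ (-(3/2) : ℝ) := by positivity
    by_cases hsb : s ∈ Metric.closedBall (b:ℂ) 1
    · refine le_trans ?_ (mul_le_mul_of_nonneg_right (le_max_left _ _) hr)
      have h1 := (hM s ⟨hsb, hs⟩).trans (le_abs_self M)
      have h2 : ‖s‖ ≤ b + 1 := by
        rw [Metric.mem_closedBall, dist_eq_norm] at hsb
        calc ‖s‖ = ‖(s - b) + b‖ := by rw [sub_add_cancel]
          _ ≤ ‖s - b‖ + ‖(b:ℂ)‖ := norm_add_le _ _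
          _ ≤ 1 + b := by
            rw [Complex.norm_real, Real.norm_eq_abs, abs_of_pos (by linarith : 0 < b)]; linarith
          _ = _ := by ring
      have h3 : 1 ≤ (b+1) ^ (3/2 : ℝ) * ‖s‖ ^ (-(3/2) : ℝ) := by
        rw [Real.rpow_neg hs0.le, ← div_eq_mul_inv, one_le_div (by positivity)]
        exact Real.rpow_le_rpow hs0.le h2 (by norm_num)
      rw [mul_assoc]
      nlinarith [abs_nonneg M]
    · refine le_trans ?_ (mul_le_mul_of_nonneg_right (le_max_right _ _) hr)
      rw [Metric.mem_closedBall, dist_eq_norm, not_le] at hsb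
      have hsb0 : s ≠ b := by rintro rfl; simp at hsb; linarith
      have hF1 : F s = (N s - N b) / (s * (s - b)) := by
        simp only [hF]
        rw [dslope_of_ne _ hsb0, slope_def_field, div_div, mul_comm s]
      have e : ‖s‖ ^ (-(3/2) : ℝ) = ‖s‖ ^ (1/2 : ℝ) / (‖s‖ * ‖s‖) := by
        rw [show (-(3/2) : ℝ) = 1/2 - 2 by norm_num, Real.rpow_sub hs0]
        norm_num [sq]
      have h2 : ‖s‖ ≤ (b + 1) * ‖s - b‖ := by
        have h4 : ‖s‖ ≤ b + ‖s - b‖ := by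
          calc ‖s‖ = ‖(b:ℂ) + (s - b)‖ := by rw [add_sub_cancel]
            _ ≤ ‖(b:ℂ)‖ + ‖s - b‖ := norm_add_le _ _
            _ = _ := by rw [Complex.norm_real, Real.norm_eq_abs, abs_of_pos (by linarith : 0 < b)]
        nlinarith
      have h5 : ‖N s - N b‖ ≤ (A + 2 * ‖N b‖) * ‖s‖ ^ (1/2 : ℝ) := by
        have h6 := norm_sub_le (N s) (N b)
        have h7 := hA' s hs
        have h8 := half_le_rpow (w := s) (by linarith)
        nlinarith [norm_nonneg (N b)]
      have hsb1 : 0 < ‖s - b‖ := by linarith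
      rw [hF1, norm_div, norm_mul, e, div_le_iff₀ (by positivity)]
      have hq : 0 ≤ A + 2 * ‖N b‖ := by positivity
      calc ‖N s - N b‖ ≤ (A + 2 * ‖N b‖) * ‖s‖ ^ (1/2 : ℝ) := h5
        _ = (A + 2 * ‖N b‖) * ‖s‖ ^ (1/2 : ℝ) / ‖s‖ * ‖s‖ := by field_simp
        _ ≤ (A + 2 * ‖N b‖) * ‖s‖ ^ (1/2 : ℝ) / ‖s‖ * ((b + 1) * ‖s - b‖) :=
            mul_le_mul_of_nonneg_left h2 (by positivity)
        _ = _ := by field_simp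
  obtain ⟨C, hC⟩ := hFb
  have hF0 := halfplane_zero hσ hFd hC
  have hFi : Integrable (fun t => F (vl σ t)) :=
    vl_integrable hσ (hFd.continuousOn.comp_continuous (vl_cont σ) (fun t => by
        change 1/2 < (vl σ t).re; rwa [vl_re])) (fun s hs => hC s hs.ge)
  have hki : Integrable (fun t : ℝ => (1:ℂ) / (vl σ t * (b - vl σ t))) := by
    refine N_int (N := fun _ => 1) (differentiableOn_const _) ?_ hσ hσb
    intro τ hτ
    refine ⟨2, by norm_num, fun s hs => ?_⟩
    rw [norm_one]; exact half_le_rpow (by linarith)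
  have e : ∀ t : ℝ, N (vl σ t) / (vl σ t * (b - vl σ t)) =
      N b * ((1:ℂ) / (vl σ t * (b - vl σ t))) - F (vl σ t) := by
    intro t
    have h1 : vl σ t ≠ 0 := by
      intro h; have := congrArg Complex.re h; simp at this; linarith
    have h2 : vl σ t ≠ b := by
      intro h; have := congrArg Complex.re h; simp at this; linarith
    have h3 : (b:ℂ) - vl σ t ≠ 0 := sub_ne_zero.mpr h2.symm
    have h4 : vl σ t - (b:ℂ) ≠ 0 := sub_ne_zero.mpr h2
    simp only [hF]
    rw [dslope_of_ne _ h2, slope_def_field]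
    rw [show vl σ t - (b:ℂ) = -((b:ℂ) - vl σ t) by ring]
    field_simp
    ring
  simp_rw [e]
  rw [integral_sub (hki.const_mul _) hFi, hF0, integral_const_mul, int_kernel hb hσ hσb]
  ring
end HB

namespace HB

open scoped Real
open Filter Topology MeasureTheory Set
open ArithmeticFunction (vonMangoldt)

lemma D_diff (hG : ∀ s ∈ HP, riemannZeta₁ s ≠ 0) : DifferentiableOn ℂ (logDeriv riemannZeta₁) HP := by
  have h1 : DifferentiableOn ℂ (deriv riemannZeta₁) HP :=
    differentiable_riemannZeta₁.differentiableOn.deriv HP_open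
  exact h1.div differentiable_riemannZeta₁.differentiableOn hG

lemma D_gr (hG : ∀ s ∈ HP, riemannZeta₁ s ≠ 0) : Gr (logDeriv riemannZeta₁) := by
  intro σ hσ
  set h := min (σ - 1/2) (3/2) with hh
  have h0 : 0 < h := lt_min (by linarith) (by norm_num)
  refine ⟨192/h^2*3, by positivity, fun s hs => ?_⟩
  have h1 := (G_log hG h0 (min_le_right _ _) (s := s) (by
    have := min_le_left (σ - 1/2) (3/2); linarith)).1
  have h2 : √(4 + ‖s‖) ≤ 3 * ‖s‖ ^ (1/2 : ℝ) := by
    rw [← Real.sqrt_eq_rpow]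
    rw [Real.sqrt_le_left (by positivity), mul_pow, Real.sq_sqrt (norm_nonneg _)]
    linarith [Complex.re_le_norm s]
  calc _ ≤ _ := h1
    _ ≤ 192/h^2*(3 * ‖s‖ ^ (1/2 : ℝ)) := mul_le_mul_of_nonneg_left h2 (by positivity)
    _ = _ := by ring

lemma L_diff : DifferentiableOn ℂ (fun w : ℂ => Complex.log (w/2 + 1)) HP := by
  intro w hw
  have hw' : 1/2 < w.re := hw
  refine (DifferentiableAt.clog (by fun_prop) ?_).differentiableWithinAt
  left
  simp; linarith

lemma L_gr : Gr (fun w : ℂ => Complex.log (w/2 + 1)) := by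
  intro σ hσ
  refine ⟨4 + 2*π, by positivity, fun s hs => ?_⟩
  have hs0 : 1/2 < s.re := by linarith
  have hn := Complex.re_le_norm s
  have h1 : (1:ℝ) ≤ ‖s/2+1‖ := by
    have := Complex.re_le_norm (s/2+1)
    simp at this; linarith
  have h2 : ‖s/2+1‖ ≤ 4 * ‖s‖ := by
    have := norm_add_le (s/2) 1
    simp at this
    linarith
  have h3 : ‖Complex.log (s/2+1)‖ ≤ |Real.log ‖s/2+1‖| + π := by
    have := Complex.norm_le_abs_re_add_abs_im (Complex.log (s/2+1))
    rw [Complex.log_re, Complex.log_im] at this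
    exact this.trans (add_le_add_right (Complex.abs_arg_le_pi _) _)
  rw [abs_of_nonneg (Real.log_nonneg h1)] at h3
  have h4 : Real.log ‖s/2+1‖ ≤ 4 * ‖s‖ ^ (1/2 : ℝ) := by
    have h5 := Real.log_le_rpow_div (norm_nonneg (s/2+1)) (by norm_num : (0:ℝ) < 1/2)
    have h6 : ‖s/2+1‖ ^ (1/2 : ℝ) ≤ 2 * ‖s‖ ^ (1/2 : ℝ) := by
      calc _ ≤ (4 * ‖s‖) ^ (1/2 : ℝ) := Real.rpow_le_rpow (norm_nonneg _) h2 (by norm_num)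
        _ = _ := by
          rw [Real.mul_rpow (by norm_num) (norm_nonneg _)]
          congr 1
          rw [show (4:ℝ) = 2^(2:ℝ) by norm_num, ← Real.rpow_mul (by norm_num)]; norm_num
    linarith
  have h7 := half_le_rpow hs0
  nlinarith [Real.pi_pos]

lemma xp_gr {N : ℂ → ℂ} (hN : Gr N) {x : ℝ} (hx : 1 ≤ x) : Gr (fun w => N w * (x:ℂ)^(-w)) := by
  intro σ hσ
  obtain ⟨C, h0, hC⟩ := hN σ hσ
  refine ⟨C, h0, fun s hs => ?_⟩
  rw [norm_mul, Complex.norm_cpow_eq_rpow_re_of_pos (by linarith)]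
  have : x ^ (-s).re ≤ 1 := Real.rpow_le_one_of_one_le_of_nonpos hx (by simp; linarith)
  have h2 : 0 ≤ x ^ (-s).re := by positivity
  nlinarith [hC s hs, norm_nonneg (N s)]

lemma xp_diff {N : ℂ → ℂ} (hN : DifferentiableOn ℂ N HP) {x : ℝ} (hx : 1 ≤ x) :
    DifferentiableOn ℂ (fun w => N w * (x:ℂ)^(-w)) HP := by
  refine hN.mul (fun w _ => ?_)
  refine (DifferentiableAt.const_cpow (by fun_prop) (Or.inl ?_)).differentiableWithinAt
  have : x ≠ 0 := by linarith
  exact_mod_cast this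

/-- The integrand in the explicit formula. -/
noncomputable def fx (x : ℝ) (s : ℂ) : ℂ := logDeriv riemannZeta₁ s / (s * (s+1)) * (x:ℂ)^s

lemma fx_diff (hG : ∀ s ∈ HP, riemannZeta₁ s ≠ 0) {x : ℝ} (hx : 1 ≤ x) : DifferentiableOn ℂ (fx x) HP := by
  refine ((D_diff hG).div (by fun_prop) ?_).mul ?_
  · intro w hw
    have hw' : 1/2 < w.re := hw
    apply mul_ne_zero
    · rintro rfl; simp at hw'; linarith
    · intro h
      have := congrArg Complex.re h
      simp at this; linarith
  · intro w _
    refine (DifferentiableAt.const_cpow (by fun_prop) (Or.inl ?_)).differentiableWithinAt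
    have : x ≠ 0 := by linarith
    exact_mod_cast this

lemma norm_le_add_one {s : ℂ} (hs : 0 < s.re) : ‖s‖ ≤ ‖s+1‖ := by
  rw [← sq_le_sq₀ (norm_nonneg _) (norm_nonneg _), Complex.sq_norm, Complex.sq_norm,
    Complex.normSq_apply, Complex.normSq_apply]
  simp; nlinarith

lemma fx_bound (hG : ∀ s ∈ HP, riemannZeta₁ s ≠ 0) {x σ : ℝ} (hx : 1 ≤ x) (hσ : 1/2 < σ) :
    ∃ C : ℝ, ∀ s : ℂ, σ ≤ s.re → s.re ≤ 2 → ‖fx x s‖ ≤ C * ‖s‖ ^ (-(3/2) : ℝ) := by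
  obtain ⟨A, hA, hA'⟩ := D_gr hG σ hσ
  refine ⟨A * x^2, fun s h1 h2 => ?_⟩
  have hs0 : 0 < ‖s‖ := by linarith [Complex.re_le_norm s]
  have hs1 : ‖s‖ ≤ ‖s+1‖ := norm_le_add_one (by linarith)
  have e : ‖s‖ ^ (-(3/2) : ℝ) = ‖s‖ ^ (1/2 : ℝ) / (‖s‖ * ‖s‖) := by
    rw [show (-(3/2) : ℝ) = 1/2 - 2 by norm_num, Real.rpow_sub hs0]
    norm_num [sq]
  rw [fx, norm_mul, norm_div, norm_mul, Complex.norm_cpow_eq_rpow_re_of_pos (by linarith), e]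
  have h3 : x ^ s.re ≤ x^2 := by
    rw [← Real.rpow_natCast]
    exact Real.rpow_le_rpow_of_exponent_le hx (by exact_mod_cast h2)
  calc _ ≤ A * ‖s‖ ^ (1/2 : ℝ) / (‖s‖ * ‖s‖) * x^2 := by
        gcongr
        exact hA' s h1
    _ = _ := by ring

lemma fx_int (hG : ∀ s ∈ HP, riemannZeta₁ s ≠ 0) {x σ : ℝ} (hx : 1 ≤ x) (hσ : 1/2 < σ) (h2 : σ ≤ 2) :
    Integrable (fun t => fx x (vl σ t)) := by
  obtain ⟨C, hC⟩ := fx_bound hG hx hσ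
  exact vl_integrable hσ ((fx_diff hG hx).continuousOn.comp_continuous (vl_cont σ) (fun t => by
        change 1/2 < (vl σ t).re; rwa [vl_re])) (fun s hs => hC s hs.ge (hs.le.trans h2))

lemma err_formula (hG : ∀ s ∈ HP, riemannZeta₁ s ≠ 0) {x σ : ℝ} (hx : 1 ≤ x) (hσ : 1/2 < σ) (h2 : σ ≤ 2) :
    (err x : ℂ) = -(x / (2*π)) * ∫ t, fx x (vl σ t) := by
  obtain ⟨C, hC⟩ := fx_bound hG hx hσ
  rw [shift hσ h2 ((fx_diff hG hx).mono (fun s hs => hσ.trans_le hs.1)) hC]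
  have hx0 : 0 < x := by linarith
  have hm : ∀ y : ℝ, mellin (fun x => (err x:ℂ)) (((-3:ℝ):ℂ) + y * Complex.I) = - fx 1 (vl 2 (-y)) := by
    intro y
    have e : (((-3:ℝ):ℂ) + y * Complex.I) = -(vl 2 (-y)) - 1 := by
      unfold vl; push_cast; ring
    rw [e, mellin_err (by rw [vl_re]; norm_num), fx]
    simp [neg_div]
  have hv : Complex.VerticalIntegrable (mellin (fun x => (err x:ℂ))) (-3) := by
    unfold Complex.VerticalIntegrable
    simp_rw [hm]
    exact ((fx_int hG le_rfl (by norm_num) (le_refl 2)).comp_neg).neg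
  have hc : MellinConvergent (fun x => (err x:ℂ)) ((-3:ℝ):ℂ) := by
    have := err_mellinConvergent (s := 2) (by norm_num)
    have e : (((-3:ℝ):ℂ)) = -2 - 1 := by push_cast; norm_num
    rw [e]; exact this
  have hinv := mellinInv_mellin_eq (-3) (fun x => (err x:ℂ)) hx0 hc hv
    (Complex.continuous_ofReal.comp err_continuous).continuousAt
  rw [← hinv, mellinInv]
  simp_rw [hm]
  have e2 : ∀ y : ℝ, (x:ℂ) ^ (-(((-3:ℝ):ℂ) + y * Complex.I)) • (- fx 1 (vl 2 (-y)))
      = -(x * fx x (vl 2 (-y))) := by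
    intro y
    have e3 : -(((-3:ℝ):ℂ) + y * Complex.I) = vl 2 (-y) + 1 := by unfold vl; push_cast; ring
    have hxc : (x:ℂ) ≠ 0 := by exact_mod_cast hx0.ne'
    rw [e3, Complex.cpow_add _ _ hxc, Complex.cpow_one, smul_eq_mul, fx, fx]
    simp
    ring
  simp_rw [e2]
  rw [integral_neg, integral_const_mul, integral_neg_eq_self (fun y => fx x (vl 2 y)) volume]
  rw [Complex.real_smul]
  push_cast
  ring
end HB

namespace HB

open scoped Real
open Filter Topology MeasureTheory Set
open ArithmeticFunction (vonMangoldt)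

lemma Gr.add {M N : ℂ → ℂ} (hM : Gr M) (hN : Gr N) : Gr (fun w => M w + N w) := by
  intro σ hσ
  obtain ⟨A, h0, hA⟩ := hM σ hσ
  obtain ⟨B, h1, hB⟩ := hN σ hσ
  refine ⟨A + B, by positivity, fun s hs => ?_⟩
  have := norm_add_le (M s) (N s)
  have := hA s hs
  have := hB s hs
  rw [add_mul]; linarith

lemma vl_conj (σ t : ℝ) : ((2*σ : ℝ) : ℂ) - vl σ t = starRingEnd ℂ (vl σ t) := by
  apply Complex.ext <;> (simp; try ring)

lemma cpow_conj' {x : ℝ} (hx : 0 < x) (w : ℂ) :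
    starRingEnd ℂ ((x:ℂ)^w) = (x:ℂ)^(starRingEnd ℂ w) := by
  have hxc : (x:ℂ) ≠ 0 := by exact_mod_cast hx.ne'
  rw [Complex.cpow_def_of_ne_zero hxc, Complex.cpow_def_of_ne_zero hxc, ← Complex.exp_conj, map_mul,
    ← Complex.ofReal_log hx.le, Complex.conj_ofReal]

lemma W_eq {D : ℂ → ℂ} (hD : DifferentiableOn ℂ D HP) (hgr : Gr D) {x σ : ℝ} (hx : 1 ≤ x) (hσ : 1/2 < σ) :
    ‖∫ t, starRingEnd ℂ (D (vl σ t)) / (vl σ t * (vl σ t + 1)) * (x:ℂ)^(vl σ t)‖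
      ≤ 2*π*(‖D ((2*σ : ℝ):ℂ)‖ + ‖D ((2*σ+1 : ℝ):ℂ)‖ / x) := by
  have hx0 : 0 < x := by linarith
  have hxc : (x:ℂ) ≠ 0 := by exact_mod_cast hx0.ne'
  set N : ℂ → ℂ := fun w => D w * (x:ℂ)^(-w) with hN
  have hNd := xp_diff hD hx
  have hNg := xp_gr hgr hx
  set b : ℝ := 2*σ with hb
  have p1 := pois hNd hNg (b := b) (by linarith) hσ (by linarith)
  have p2 := pois hNd hNg (b := b+1) (by linarith) hσ (by linarith)
  have i1 := N_int hNd hNg (b := b) hσ (by linarith)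
  have i2 := N_int hNd hNg (b := b+1) hσ (by linarith)
  have e : ∀ t, starRingEnd ℂ (D (vl σ t)) / (vl σ t * (vl σ t + 1)) * (x:ℂ)^(vl σ t)
      = starRingEnd ℂ ((x:ℂ)^(b:ℂ) * (b * (N (vl σ t) / (vl σ t * (b - vl σ t)))
         - ((b+1:ℝ):ℂ) * (N (vl σ t) / (vl σ t * ((b+1:ℝ) - vl σ t))))) := by
    intro t
    have hc := vl_conj σ t
    rw [← hb] at hc
    have h1 : vl σ t ≠ 0 := by
      intro h; have := congrArg Complex.re h; simp at this; linarith
    have h2 : (b:ℂ) - vl σ t ≠ 0 := by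
      intro h; have := congrArg Complex.re h; simp at this; linarith
    have h3 : ((b+1:ℝ):ℂ) - vl σ t ≠ 0 := by
      intro h; have := congrArg Complex.re h; simp at this; linarith
    have h3' : (b:ℂ) - vl σ t + 1 ≠ 0 := by
      intro h; apply h3; rw [← h]; push_cast; ring
    have hin : (x:ℂ)^(b:ℂ) * (b * (N (vl σ t) / (vl σ t * (b - vl σ t)))
         - ((b+1:ℝ):ℂ) * (N (vl σ t) / (vl σ t * ((b+1:ℝ) - vl σ t))))
         = D (vl σ t) / (((b:ℂ) - vl σ t) * ((b:ℂ) - vl σ t + 1)) * (x:ℂ)^((b:ℂ) - vl σ t) := by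
      rw [sub_eq_add_neg (b:ℂ) (vl σ t), Complex.cpow_add _ _ hxc, ← sub_eq_add_neg]
      have e4 : ((b+1:ℝ):ℂ) - vl σ t = (b:ℂ) - vl σ t + 1 := by push_cast; ring
      rw [e4]
      simp only [hN]
      push_cast
      field_simp
      ring
    rw [hin, hc]
    simp only [map_mul, map_div₀, map_add, map_one, Complex.conj_conj]
    rw [cpow_conj' hx0, Complex.conj_conj]
  simp_rw [e]
  rw [integral_conj, RCLike.norm_conj, integral_const_mul,
    integral_sub (i1.const_mul _) (i2.const_mul _), integral_const_mul, integral_const_mul, p1, p2]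
  have hb0 : (b:ℂ) ≠ 0 := by
    have : b ≠ 0 := by linarith
    exact_mod_cast this
  have hb1 : ((b+1:ℝ):ℂ) ≠ 0 := by
    have : b+1 ≠ 0 := by linarith
    exact_mod_cast this
  have hfin : (x:ℂ)^(b:ℂ) * (b * (2 * π * N b / b) - ((b+1:ℝ):ℂ) * (2 * π * N ((b+1:ℝ):ℂ) / ((b+1:ℝ):ℂ)))
      = 2 * π * (D b - D ((b+1:ℝ):ℂ) / x) := by
    have h1 : (x:ℂ)^(-(b:ℂ)) = ((x:ℂ)^(b:ℂ))⁻¹ := Complex.cpow_neg _ _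
    have h2 : (x:ℂ)^(-((b+1:ℝ):ℂ)) = ((x:ℂ)^(b:ℂ))⁻¹ * (x:ℂ)⁻¹ := by
      rw [Complex.cpow_neg]; push_cast
      rw [Complex.cpow_add _ _ hxc, Complex.cpow_one, mul_inv]
    have h3 : (x:ℂ)^(b:ℂ) ≠ 0 := by
      rw [Complex.cpow_def_of_ne_zero hxc]; exact Complex.exp_ne_zero _
    simp only [hN]
    rw [h1, h2]
    field_simp
  rw [hfin, norm_mul]
  have h5 : ‖(2 * π : ℂ)‖ = 2 * π := by
    have : (2 * π : ℂ) = ((2*π:ℝ):ℂ) := by push_cast; rfl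
    rw [this, Complex.norm_real, Real.norm_eq_abs, abs_of_pos (by positivity)]
  rw [h5]
  refine mul_le_mul_of_nonneg_left ?_ (by positivity)
  refine (norm_sub_le _ _).trans ?_
  rw [norm_div, Complex.norm_real, Real.norm_eq_abs, abs_of_pos hx0]

lemma err_sigma (hG : ∀ s ∈ HP, riemannZeta₁ s ≠ 0) {x σ : ℝ} (hx : 1 ≤ x) (hσ : 1/2 < σ) (h2 : σ ≤ 2) :
    |err x| ≤ x * (2 * x^σ * ((‖logDeriv riemannZeta₁ ((2*σ : ℝ):ℂ)‖ + Real.log (σ + 1)) / (2*σ))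
      + ‖logDeriv riemannZeta₁ ((2*σ : ℝ):ℂ)‖ + ‖logDeriv riemannZeta₁ ((2*σ+1 : ℝ):ℂ)‖ / x) := by
  set D := logDeriv riemannZeta₁ with hD
  have hx0 : 0 < x := by linarith
  have hDd := D_diff hG
  have hDg := D_gr hG
  have hW := W_eq hDd hDg hx hσ
  have hf := err_formula hG hx hσ h2
  have hfi := fx_int hG hx hσ h2
  -- the combined function
  set N : ℂ → ℂ := fun w => D w + Complex.log (w/2 + 1) with hN
  have hNd : DifferentiableOn ℂ N HP := hDd.add L_diff
  have hNg : Gr N := hDg.add L_gr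
  have p1 := pois hNd hNg (b := 2*σ) (by linarith) hσ (by linarith)
  have i1 := N_int hNd hNg (b := 2*σ) hσ (by linarith)
  set w : ℝ → ℂ := fun t => starRingEnd ℂ (D (vl σ t)) / (vl σ t * (vl σ t + 1)) * (x:ℂ)^(vl σ t) with hw
  have hHP : ∀ t, vl σ t ∈ HP := fun t => by change 1/2 < (vl σ t).re; rwa [vl_re]
  have hwi : Integrable w := by
    refine hfi.mono ?_ ?_
    · apply Continuous.aestronglyMeasurable
      have c1 : Continuous (fun t => D (vl σ t)) :=
        hDd.continuousOn.comp_continuous (vl_cont σ) hHP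
      have c2 := vl_cont σ
      refine Continuous.mul (Continuous.div (Complex.continuous_conj.comp c1) (c2.mul (c2.add continuous_const)) ?_) ?_
      · intro t
        apply mul_ne_zero
        · intro h; have := congrArg Complex.re h; simp at this; linarith
        · intro h; have := congrArg Complex.re h; simp at this; linarith
      · exact c2.const_cpow (Or.inl (by exact_mod_cast hx0.ne'))
    · apply Eventually.of_forall
      intro t
      apply le_of_eq
      simp only [hw, fx, norm_mul, norm_div, RCLike.norm_conj, hD]
  have hsum : ∫ t, fx x (vl σ t) = (∫ t, (fx x (vl σ t) + w t)) - ∫ t, w t := by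
    rw [integral_add hfi hwi]; ring
  have hbd : ‖∫ t, (fx x (vl σ t) + w t)‖ ≤
      ∫ t, 2 * x^σ * (N (vl σ t) / (vl σ t * ((2*σ:ℝ) - vl σ t))).re := by
    refine norm_integral_le_of_norm_le (i1.re.const_mul _) (Eventually.of_forall fun t => ?_)
    have hs := re_D_lower hG (hHP t)
    rw [← hD] at hs
    have hre0 : 0 < (vl σ t).re := by rw [vl_re]; linarith
    have hs0 : 0 < ‖vl σ t‖ := hre0.trans_le (Complex.re_le_norm _)
    have hs1 := norm_le_add_one hre0
    have hB : 0 ≤ Real.log ‖vl σ t/2 + 1‖ := by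
      apply Real.log_nonneg
      have := Complex.re_le_norm (vl σ t/2 + 1)
      simp at this; linarith
    have e1 : fx x (vl σ t) + w t = ((2 * (D (vl σ t)).re : ℝ):ℂ) / (vl σ t * (vl σ t + 1)) * (x:ℂ)^(vl σ t) := by
      simp only [fx, hw, ← hD]
      rw [← add_mul, ← add_div, Complex.add_conj]
    have e2 : (N (vl σ t) / (vl σ t * ((2*σ:ℝ) - vl σ t))).re
        = ((D (vl σ t)).re + Real.log ‖vl σ t/2 + 1‖) / (‖vl σ t‖ * ‖vl σ t‖) := by
      rw [vl_conj, Complex.mul_conj, Complex.div_ofReal_re, ← Complex.sq_norm, sq]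
      simp only [hN, Complex.add_re, Complex.log_re]
    rw [e1, e2, norm_mul, norm_div, norm_mul, Complex.norm_cpow_eq_rpow_re_of_pos hx0, vl_re,
      Complex.norm_real, Real.norm_eq_abs]
    have h3 : |2 * (D (vl σ t)).re| ≤ 2 * ((D (vl σ t)).re + Real.log ‖vl σ t/2 + 1‖) := by
      rw [abs_le]; constructor <;> linarith
    have h4 : 0 ≤ 2 * ((D (vl σ t)).re + Real.log ‖vl σ t/2 + 1‖) := (abs_nonneg _).trans h3
    calc _ ≤ 2 * ((D (vl σ t)).re + Real.log ‖vl σ t/2 + 1‖) / (‖vl σ t‖ * ‖vl σ t‖) * x^σ := by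
          gcongr
      _ = _ := by ring
  have hre : ∫ t, (N (vl σ t) / (vl σ t * ((2*σ:ℝ) - vl σ t))).re = 2*π*((N ((2*σ:ℝ):ℂ)).re/(2*σ)) := by
    have h5 := Complex.reCLM.integral_comp_comm i1
    simp only [Complex.reCLM_apply] at h5
    rw [h5, p1, Complex.div_ofReal_re]
    have : (2 * π * N ((2*σ:ℝ):ℂ) : ℂ) = ((2*π:ℝ):ℂ) * N ((2*σ:ℝ):ℂ) := by push_cast; rfl
    rw [this, Complex.re_ofReal_mul]; ring
  have hNre : (N ((2*σ:ℝ):ℂ)).re ≤ ‖D ((2*σ:ℝ):ℂ)‖ + Real.log (σ+1) := by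
    simp only [hN, Complex.add_re, Complex.log_re]
    have e6 : (((2*σ:ℝ):ℂ)/2 + 1) = ((σ+1:ℝ):ℂ) := by push_cast; ring
    rw [e6, Complex.norm_real, Real.norm_eq_abs, abs_of_pos (by linarith : 0 < σ+1)]
    exact add_le_add_left (Complex.re_le_norm _) _
  rw [integral_const_mul, hre] at hbd
  have hpi := Real.pi_pos
  have hn : ‖∫ t, fx x (vl σ t)‖ ≤ 2 * x^σ * (2*π*((‖D ((2*σ:ℝ):ℂ)‖ + Real.log (σ+1))/(2*σ)))
      + 2*π*(‖D ((2*σ : ℝ):ℂ)‖ + ‖D ((2*σ+1 : ℝ):ℂ)‖ / x) := by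
    rw [hsum]
    refine (norm_sub_le _ _).trans (add_le_add (hbd.trans ?_) hW)
    gcongr
  have hne : |err x| = x/(2*π) * ‖∫ t, fx x (vl σ t)‖ := by
    have := congrArg norm hf
    rw [Complex.norm_real, Real.norm_eq_abs, norm_mul] at this
    rw [this]
    congr 1
    have e7 : (-(x / (2*π)) : ℂ) = ((-(x/(2*π)) : ℝ) : ℂ) := by push_cast; rfl
    rw [e7, Complex.norm_real, Real.norm_eq_abs, abs_neg, abs_of_pos (by positivity)]
  rw [hne]
  refine (mul_le_mul_of_nonneg_left hn (by positivity)).trans (le_of_eq ?_)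
  field_simp
  ring
end HB

namespace HB

open scoped Real
open Filter Topology MeasureTheory Set
open ArithmeticFunction (vonMangoldt)

lemma D_one : ‖logDeriv riemannZeta₁ 1‖ ≤ 2/3 := by
  rw [logDeriv_apply, riemannZeta₁_one, deriv_riemannZeta₁_one, div_one, Complex.norm_real,
    Real.norm_eq_abs, abs_of_pos (by linarith [Real.one_half_lt_eulerMascheroniConstant])]
  exact Real.eulerMascheroniConstant_lt_two_thirds.le

lemma D_two (hG : ∀ s ∈ HP, riemannZeta₁ s ≠ 0) : ‖logDeriv riemannZeta₁ 2‖ ≤ 1 := by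
  have hz : riemannZeta 2 ≠ 0 := riemannZeta_ne_zero_of_one_le_re (by norm_num)
  have h1 := logDeriv_zeta (s := 2) (by norm_num) hz
  have h2 := ArithmeticFunction.LSeries_vonMangoldt_eq_deriv_riemannZeta_div (s := 2) (by norm_num)
  rw [h1] at h2
  have h3 : LSeries (fun n => (vonMangoldt n : ℂ)) 2 = ((∑' n : ℕ, vonMangoldt n / (n:ℝ)^2 : ℝ) : ℂ) := by
    rw [LSeries, Complex.ofReal_tsum]
    congr 1
    ext n
    rw [LSeries.term_def]
    split_ifs with h
    · simp [h]
    · rw [Complex.cpow_ofNat]; push_cast; rfl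
  set S : ℝ := ∑' n : ℕ, vonMangoldt n / (n:ℝ)^2 with hS
  have hS0 : 0 ≤ S := tsum_nonneg (fun n => div_nonneg ArithmeticFunction.vonMangoldt_nonneg (by positivity))
  have h4 : logDeriv riemannZeta₁ 2 = ((1 - S : ℝ) : ℂ) := by
    have h5 := h3.symm.trans h2
    push_cast
    rw [h5]; norm_num
  have h6 := re_D_lower hG (s := 2) (by change (1/2:ℝ) < (2:ℂ).re; norm_num)
  rw [h4] at h6 ⊢
  rw [Complex.ofReal_re] at h6
  have h7 : Real.log ‖(2:ℂ)/2+1‖ ≤ 1 := by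
    have : ‖(2:ℂ)/2+1‖ = 2 := by norm_num
    rw [this]; linarith [Real.log_two_lt_d9]
  rw [Complex.norm_real, Real.norm_eq_abs, abs_le]
  constructor <;> linarith

lemma err_half (hG : ∀ s ∈ HP, riemannZeta₁ s ≠ 0) {x : ℝ} (hx : 1 ≤ x) :
    |err x| ≤ x * (2 * x^(1/2:ℝ) * (2/3 + 1/2) + 2/3 + 1 / x) := by
  have hx0 : 0 < x := by linarith
  set D := logDeriv riemannZeta₁ with hD
  have hc : ∀ s ∈ HP, ContinuousAt D s := fun s hs =>
    (D_diff hG).continuousOn.continuousAt (HP_open.mem_nhds hs)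
  have c1 : ContinuousAt (fun σ : ℝ => D ((2*σ:ℝ):ℂ)) (1/2) := by
    refine ContinuousAt.comp (g := D) (hc _ ?_) (by fun_prop)
    change (1/2:ℝ) < (((2*(1/2):ℝ):ℂ)).re
    rw [Complex.ofReal_re]; norm_num
  have c2 : ContinuousAt (fun σ : ℝ => D ((2*σ+1:ℝ):ℂ)) (1/2) := by
    refine ContinuousAt.comp (g := D) (hc _ ?_) (by fun_prop)
    change (1/2:ℝ) < (((2*(1/2)+1:ℝ):ℂ)).re
    rw [Complex.ofReal_re]; norm_num
  have c3 : ContinuousAt (fun σ : ℝ => x * (2 * x^σ * ((‖D ((2*σ : ℝ):ℂ)‖ + Real.log (σ + 1)) / (2*σ))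
      + ‖D ((2*σ : ℝ):ℂ)‖ + ‖D ((2*σ+1 : ℝ):ℂ)‖ / x)) (1/2) := by
    have c4 : ContinuousAt (fun σ : ℝ => x^σ) (1/2) :=
      ContinuousAt.rpow continuousAt_const continuousAt_id (Or.inl hx0.ne')
    have c5 : ContinuousAt (fun σ : ℝ => Real.log (σ+1)) (1/2) :=
      ContinuousAt.log (by fun_prop) (by norm_num)
    have c6 : ContinuousAt (fun σ : ℝ => 2*σ) (1/2) := by fun_prop
    exact continuousAt_const.mul ((((continuousAt_const.mul c4).mul ((c1.norm.add c5).div c6 (by norm_num))).add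
      c1.norm).add (c2.norm.div_const x))
  have hle := ge_of_tendsto (c3.tendsto.mono_left (nhdsWithin_le_nhds (s := Ioi (1/2)))) (b := |err x|) (by
    have hm : ∀ᶠ σ : ℝ in 𝓝[>] (1/2), σ ∈ Ioo (1/2:ℝ) 2 := Ioo_mem_nhdsGT (by norm_num)
    filter_upwards [hm] with σ hσ
    exact err_sigma hG hx hσ.1 hσ.2.le)
  have e1 : ((2*(1/2):ℝ):ℂ) = 1 := by push_cast; norm_num
  have e2 : ((2*(1/2)+1:ℝ):ℂ) = 2 := by push_cast; norm_num
  simp only [e1, e2] at hle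
  refine hle.trans ?_
  have h1 := D_one
  have h2 := D_two hG
  rw [← hD] at h1 h2
  have h3 : Real.log (1/2+1) ≤ 1/2 := by
    have := Real.log_le_sub_one_of_pos (x := 1/2+1) (by norm_num)
    linarith
  have h4 : (‖D 1‖ + Real.log (1/2+1)) / (2*(1/2)) ≤ 2/3 + 1/2 := by
    rw [show (2*(1/2):ℝ) = 1 by norm_num, div_one]; linarith
  gcongr

lemma bound_of_RH (h : RH) (n : ℕ) (hn : 0 < n) :
    ((∑ k ∈ Finset.Icc 1 (delta n), (1 : ℝ) / k) - (n : ℝ) ^ 2 / 2) ^ 2 < 36 * (n : ℝ) ^ 3 := by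
  have hG := G_ne_zero_of_RH h
  have hx : (1:ℝ) ≤ n := by exact_mod_cast hn
  have h1 := err_half hG hx
  have h2 := harmonic_delta n
  set H := ∑ k ∈ Finset.Icc 1 (delta n), (1 : ℝ) / k
  rw [← Real.sqrt_eq_rpow] at h1
  set r := √(n:ℝ) with hr
  have hr2 : (n:ℝ) = r^2 := (Real.sq_sqrt (by positivity)).symm
  have hr1 : 1 ≤ r := Real.one_le_sqrt.mpr hx
  rw [err, max_eq_left (by linarith)] at h1
  rw [hr2] at h1 h2 ⊢
  have h3 : r^2 * (2 * r * (2/3 + 1/2) + 2/3 + 1/r^2) = 7/3 * r^3 + 2/3*r^2 + 1 := by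
    field_simp; ring
  rw [h3] at h1
  rw [abs_le] at h1 h2
  have h4 : r^2 ≤ r^3 := by nlinarith [sq_nonneg r]
  have h5 : 1 ≤ r^2 := by nlinarith
  have h6 : |H - (r^2)^2/2| < 6 * r^3 := by
    rw [abs_lt]; constructor <;> nlinarith
  calc (H - (r^2)^2/2)^2 = |H - (r^2)^2/2|^2 := (sq_abs _).symm
    _ < (6*r^3)^2 := by gcongr
    _ = _ := by ring
end HB

theorem rh_iff_harmonic_bound :
    RH ↔ ∀ n : ℕ, 0 < n →
      ((∑ k ∈ Finset.Icc 1 (delta n), (1 : ℝ) / k) - (n : ℝ) ^ 2 / 2) ^ 2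
        < 36 * (n : ℝ) ^ 3 :=
  ⟨HB.bound_of_RH, HB.RH_of_bound⟩
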